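/- arXiv:2110.07854 — 2 statements merged into one kernel-verified Lean document; each statement's English description precedes it below -/
import Mathlib

section
/- For every prime p, every real β > 0, and every f ∈ ℂ, the series Z(f, ℙ¹(ℚ_p), β), Z(pf/(p+1), ℤ_p, β), and Z(pf/(p+1), pℤ_p, β) converge absolutely and satisfy Z(f, ℙ¹(ℚ_p), β) = Z(pf/(p+1), ℤ_p, β) · Z(pf/(p+1), pℤ_p, β). -/
open MeasureTheory
open scoped LinearAlgebra.Projectivization

namespace LogCoulomb

noncomputable section

/-! ### The projective line over `ℚ_p`, its spherical metric and `PGL₂`-invariant measure -/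

variable (p : ℕ) [Fact p.Prime]

instance : MeasurableSpace ℚ_[p] := borel _
instance : BorelSpace ℚ_[p] := ⟨rfl⟩

/-- The projective line over `ℚ_p`. -/
abbrev P1 := ℙ ℚ_[p] (Fin 2 → ℚ_[p])

instance : TopologicalSpace (P1 p) :=
  inferInstanceAs (TopologicalSpace (Quotient _))

instance : MeasurableSpace (P1 p) := borel _
instance : BorelSpace (P1 p) := ⟨rfl⟩

/-- Spherical distance on homogeneous coordinates:
`δ((x₀,x₁),(y₀,y₁)) = |x₀y₁ - x₁y₀| / (max(|x₀|,|x₁|) ⬝ max(|y₀|,|y₁|))`. -/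
def sdelta (x y : Fin 2 → ℚ_[p]) : ℝ :=
  ‖x 0 * y 1 - x 1 * y 0‖ / (max ‖x 0‖ ‖x 1‖ * max ‖y 0‖ ‖y 1‖)

/-- The spherical metric on `ℙ¹(ℚ_p)`, defined via the canonical representatives. -/
def pdelta (ξ η : P1 p) : ℝ := sdelta p ξ.rep η.rep

open Classical in
/-- The action of a matrix on `ℙ¹(ℚ_p)`: `[x₀:x₁] ↦ [a x₀ + b x₁ : c x₀ + d x₁]`
(well-defined, and given by the first branch of the `if`, whenever `A` is invertible). -/
def mobius (A : Matrix (Fin 2) (Fin 2) ℚ_[p]) (ξ : P1 p) : P1 p :=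
  if h : A.mulVec ξ.rep ≠ 0 then Projectivization.mk ℚ_[p] (A.mulVec ξ.rep) h else ξ

/-- `ν` is invariant under the action of `GL₂(ℤ_p)` on `ℙ¹(ℚ_p)`; membership of the matrix
entries in `ℤ_p`, and invertibility of the matrix over `ℤ_p`, are phrased via the `p`-adic
norm on `ℚ_p`. -/
def IsGLInvariant (ν : Measure (P1 p)) : Prop :=
  ∀ A : Matrix (Fin 2) (Fin 2) ℚ_[p],
    (∀ i j, ‖A i j‖ ≤ 1) → ‖A.det‖ = 1 →
      ∀ M : Set (P1 p), MeasurableSet M → ν (mobius p A '' M) = ν M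

/-- The embedding `ι : ℚ_p → ℙ¹(ℚ_p)`, `x ↦ [x : 1]`. -/
def iota (x : ℚ_[p]) : P1 p :=
  Projectivization.mk ℚ_[p] ![x, 1] (by
    intro h
    have h1 := congrFun h 1
    simp at h1)

/-! ### Canonical partition functions -/

/-- The pairs `(i,j)` with `i < j`. -/
def pairs (N : ℕ) : Finset (Fin N × Fin N) := Finset.univ.filter fun q => q.1 < q.2

/-- The closed unit ball `ℤ_p = R` inside `ℚ_p`. -/
def Zball : Set ℚ_[p] := {x | ‖x‖ ≤ 1}

/-- The open unit ball `pℤ_p = P` inside `ℚ_p`. -/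
def Pball : Set ℚ_[p] := {x | ‖x‖ < 1}

/-- The one-component canonical partition function
`Z_N(X, β) = ∫_{X^N} ∏_{i<j} |x_i - x_j|^β dμ^N` (as a Bochner integral, whether or not it
converges absolutely). -/
def ZN (μ : Measure ℚ_[p]) [SigmaFinite μ] (X : Set ℚ_[p]) (N : ℕ) (β : ℂ) : ℂ :=
  ∫ x : Fin N → ℚ_[p], ∏ q ∈ pairs N, (‖x q.1 - x q.2‖ : ℂ) ^ β
    ∂(Measure.pi fun _ => μ.restrict X)

/-- The multivariate canonical partition function
`𝒵_I(X, s) = ∫_{X^I} ∏_{i<j, i,j ∈ I} |x_i - x_j|^{s_{ij}} dμ^I` for a subset `I ⊆ [N]`. -/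
def ZI (μ : Measure ℚ_[p]) [SigmaFinite μ] (X : Set ℚ_[p]) {N : ℕ} (I : Finset (Fin N))
    (s : Fin N → Fin N → ℂ) : ℂ :=
  ∫ x : I → ℚ_[p],
    ∏ q ∈ Finset.univ.filter (fun q : (↥I) × (↥I) => (q.1 : Fin N) < (q.2 : Fin N)),
      (‖x q.1 - x q.2‖ : ℂ) ^ s q.1.1 q.2.1
    ∂(Measure.pi fun _ => μ.restrict X)

/-- The multivariate canonical partition function
`𝒵_N(ℙ¹(ℚ_p), s) = ∫_{(ℙ¹(ℚ_p))^N} ∏_{i<j} δ(ξ_i,ξ_j)^{s_{ij}} dν^N`. -/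
def ZP1s (ν : Measure (P1 p)) [SigmaFinite ν] (N : ℕ) (s : Fin N → Fin N → ℂ) : ℂ :=
  ∫ x : Fin N → P1 p, ∏ q ∈ pairs N, ((pdelta p (x q.1) (x q.2) : ℝ) : ℂ) ^ s q.1 q.2
    ∂(Measure.pi fun _ => ν)

/-- The one-component canonical partition function `Z_N(ℙ¹(ℚ_p), β)`. -/
def ZP1 (ν : Measure (P1 p)) [SigmaFinite ν] (N : ℕ) (β : ℂ) : ℂ :=
  ∫ x : Fin N → P1 p, ∏ q ∈ pairs N, ((pdelta p (x q.1) (x q.2) : ℝ) : ℂ) ^ β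
    ∂(Measure.pi fun _ => ν)

/-! ### The quadratic recurrence -/

/-- The factor `ρ_{N,k}(t,β)` appearing in the quadratic recurrence; here
`N.choose 2 = N(N-1)/2`. -/
def rho (N k : ℕ) (t : ℝ) (β : ℂ) : ℂ :=
  if t = 0 then
    (((N : ℂ) + (N.choose 2 : ℂ) * β) * (1 - 2 * (k : ℂ) / (N : ℂ)) + 1) /
      (((N : ℂ) + (N.choose 2 : ℂ) * β) - 1)
  else
    Complex.sinh (((t : ℂ) / 2) * (((N : ℂ) + (N.choose 2 : ℂ) * β) * (1 - 2 * (k : ℂ) / (N : ℂ)) + 1)) /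
      Complex.sinh (((t : ℂ) / 2) * (((N : ℂ) + (N.choose 2 : ℂ) * β) - 1))

/-- The quadratic recurrence: `F 0 = F 1 = 1` and
`F N t β = ∑_{k=1}^{N-1} (k/N) ρ_{N,k}(t,β) F_{N-k}(t,β) F_k(t,β)` for `N ≥ 2`. -/
def F : ℕ → ℝ → ℂ → ℂ
  | 0, _, _ => 1
  | 1, _, _ => 1
  | N + 2, t, β =>
    ∑ k ∈ (Finset.Icc 1 (N + 1)).attach,
      (((k : ℕ) : ℂ) / ((N : ℂ) + 2)) * rho (N + 2) k t β *
        F (N + 2 - (k : ℕ)) t β * F (k : ℕ) t β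
  decreasing_by
  all_goals
    have hk := Finset.mem_Icc.mp k.2
    omega

/-! ### Splitting chains -/

/-- A splitting chain `Λ_0 > Λ_1 > ⋯ > Λ_L` of set partitions of the subset `I ⊆ [N]`,
beginning with the trivial partition `{I}` and ending with the partition of `I` into
singletons.  (The values `Λ ℓ` for `ℓ > L` are required to be `∅`, so that a chain is
determined by the genuine data `Λ_0, …, Λ_L`.) -/
structure SplChain (N : ℕ) (I : Finset (Fin N)) where
  L : ℕ
  Λ : ℕ → Finset (Finset (Fin N))
  nonempty_mem : ∀ ℓ ≤ L, ∀ B ∈ Λ ℓ, B.Nonempty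
  subset_mem : ∀ ℓ ≤ L, ∀ B ∈ Λ ℓ, B ⊆ I
  cover : ∀ ℓ ≤ L, ∀ i ∈ I, ∃! B, B ∈ Λ ℓ ∧ i ∈ B
  first : Λ 0 = {I}
  last : Λ L = I.image fun i => {i}
  refines : ∀ ℓ < L, ∀ B ∈ Λ (ℓ + 1), ∃ C ∈ Λ ℓ, B ⊆ C
  strict : ∀ ℓ < L, Λ (ℓ + 1) ≠ Λ ℓ
  trailing : ∀ ℓ, L < ℓ → Λ ℓ = ∅

variable {N : ℕ} {I : Finset (Fin N)}

/-- The branches of a splitting chain: the non-singleton parts,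
`ℬ(𝔖) = (Λ_0 ∪ ⋯ ∪ Λ_{L-1}) \ Λ_L`. -/
def SplChain.branches (S : SplChain N I) : Finset (Finset (Fin N)) :=
  ((Finset.range S.L).biUnion S.Λ) \ S.Λ S.L

/-- The depth `ℓ_𝔖(λ) = max {ℓ : λ ∈ Λ_ℓ}` of a branch. -/
def SplChain.depth (S : SplChain N I) (lam : Finset (Fin N)) : ℕ :=
  ((Finset.range (S.L + 1)).filter fun ℓ => lam ∈ S.Λ ℓ).sup id

/-- The degree `deg_𝔖(λ) = #{λ' ∈ Λ_{ℓ_𝔖(λ)+1} : λ' ⊆ λ}` of a branch. -/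
def SplChain.degree (S : SplChain N I) (lam : Finset (Fin N)) : ℕ :=
  ((S.Λ (S.depth lam + 1)).filter fun lam' => lam' ⊆ lam).card

/-- A splitting chain is reduced if every branch appears in exactly one partition of the
chain (namely the one at its depth). -/
def SplChain.Reduced (S : SplChain N I) : Prop :=
  ∀ lam ∈ S.branches, ∀ ℓ ≤ S.L, (lam ∈ S.Λ ℓ ↔ ℓ = S.depth lam)

/-- `e_λ(s) = #λ - 1 + ∑_{i<j, i,j ∈ λ} s_{ij}`. -/
def eexp (lam : Finset (Fin N)) (s : Fin N → Fin N → ℂ) : ℂ :=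
  (lam.card : ℂ) - 1 + ∑ q ∈ (pairs N).filter fun q => q.1 ∈ lam ∧ q.2 ∈ lam, s q.1 q.2

/-- Membership in `Ω_I`: `Re e_λ(s) > 0` for every `λ ⊆ I` with `#λ > 1`. -/
def InOmega (I : Finset (Fin N)) (s : Fin N → Fin N → ℂ) : Prop :=
  ∀ lam ⊆ I, 1 < lam.card → 0 < (eexp lam s).re


/-- The multivariate canonical partition function `𝒵_N(ℤ_p, s)` over `Fin N`-indexed tuples. -/
def ZNs (μ : Measure ℚ_[p]) [SigmaFinite μ] (X : Set ℚ_[p]) (N : ℕ)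
    (s : Fin N → Fin N → ℂ) : ℂ :=
  ∫ x : Fin N → ℚ_[p], ∏ q ∈ pairs N, (‖x q.1 - x q.2‖ : ℂ) ^ s q.1 q.2
    ∂(Measure.pi fun _ => μ.restrict X)

/-- The ball `p^v ℤ_p = {x : |x| ≤ p^{-v}}` in `ℚ_p`. -/
def pvball (v : ℤ) : Set ℚ_[p] := {x | ‖x‖ ≤ (p : ℝ) ^ (-v)}

/-- `G_N(q,β) = N! q^{(1/2)(N choose 2)β} F_N(log q, β)`. -/
def GN (N : ℕ) (β : ℂ) (q : ℝ) : ℂ :=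
  (N.factorial : ℂ) * (q : ℂ) ^ ((N.choose 2 : ℂ) * β / 2) * F N (Real.log q) β

/-- `H_N(q,β)`, the efficient formula for `Z_N(ℙ¹(K),β)` as a function of `q`. -/
def HN (N : ℕ) (β : ℂ) (q : ℝ) : ℂ :=
  (N.factorial : ℂ) * ∑ k ∈ Finset.range (N + 1),
    Complex.cosh (((Real.log q : ℂ) / 2) * ((N : ℂ) + (N.choose 2 : ℂ) * β) *
          (1 - 2 * (k : ℂ) / (N : ℂ))) /
        (2 * Complex.cosh ((Real.log q : ℂ) / 2)) ^ N *
      F (N - k) (Real.log q) β * F k (Real.log q) β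

end

/-! Split `ℙ¹(ℚ_p)` into the image `D` of `ℤ_p` under `x ↦ [x : 1]` and its complement. Points on
different sides of this partition are at spherical distance `1`, so a configuration of particles
decouples into two non-interacting gases; summing over the set of particles lying in `D`, the
generating series factors. On `D` the spherical distance is `|x - y|_p`, and by uniqueness of Haar
measure on `ℤ_p` the restriction of `ν` is `p / (p + 1)` times the Haar measure. The inversion
`[x₀ : x₁] ↦ [x₁ : x₀]` is a measure-preserving isometry from the complement of `D` onto the image
of `pℤ_p`, which identifies the second factor. -/

section GibbsWeight

variable {X ι κ : Type*} [Fintype ι] [LinearOrder ι] [Fintype κ] [LinearOrder κ] {g : X → X → ℂ}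

/-- The Gibbs weight `∏_{i < j} g (x i) (x j)` of a configuration `x` of particles with pair
kernel `g`. -/
def gibbsWeight (g : X → X → ℂ) (x : ι → X) : ℂ :=
  ∏ q : ι × ι with q.1 < q.2, g (x q.1) (x q.2)

theorem gibbsWeight_eq_prod_prod (g : X → X → ℂ) (x : ι → X) :
    gibbsWeight g x = ∏ i, ∏ j, if i < j then g (x i) (x j) else 1 := by
  rw [gibbsWeight, Finset.prod_filter, Fintype.prod_prod_type]

theorem gibbsWeight_comp_orderIso (e : ι ≃o κ) (g : X → X → ℂ) (x : κ → X) :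
    gibbsWeight g (x ∘ e) = gibbsWeight g x := by
  simp only [gibbsWeight_eq_prod_prod, ← e.lt_iff_lt, Function.comp_apply]
  rw [← e.toEquiv.prod_comp]
  exact Finset.prod_congr rfl fun i _ =>
    e.toEquiv.prod_comp fun j => if e i < j then g (x (e i)) (x j) else 1

theorem gibbsWeight_congr {h : X → X → ℂ} {x : ι → X} {A : Set X} (hx : ∀ i, x i ∈ A)
    (hgh : ∀ a ∈ A, ∀ b ∈ A, g a b = h a b) : gibbsWeight g x = gibbsWeight h x :=
  Finset.prod_congr rfl fun q _ => hgh _ (hx q.1) _ (hx q.2)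

theorem gibbsWeight_eq_mul (S : Finset ι) {x : ι → X}
    (hx : ∀ i ∈ S, ∀ j ∉ S, g (x i) (x j) = 1 ∧ g (x j) (x i) = 1) :
    gibbsWeight g x = gibbsWeight g (fun i : {i // i ∈ S} => x i) *
      gibbsWeight g (fun i : {i // i ∉ S} => x i) := by
  have hsplit (u : ι → ℂ) : ∏ i, u i = (∏ i : {i // i ∈ S}, u i) * ∏ i : {i // i ∉ S}, u i := by
    rw [← Fintype.prod_subtype_mul_prod_subtype (· ∈ S) u]
    congr!
  simp only [gibbsWeight_eq_prod_prod]
  rw [hsplit]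
  congr 1 <;> refine Finset.prod_congr rfl fun i _ => ?_ <;> rw [hsplit]
  · rw [Fintype.prod_eq_one (fun j : {j // j ∉ S} => _), mul_one]
    · rfl
    · intro j
      rw [(hx i i.2 j j.2).1, ite_self]
  · rw [Fintype.prod_eq_one (fun j : {j // j ∈ S} => _), one_mul]
    · rfl
    · intro j
      rw [(hx j j.2 i i.2).2, ite_self]

theorem norm_gibbsWeight_le_one (hg : ∀ a b, ‖g a b‖ ≤ 1) (x : ι → X) : ‖gibbsWeight g x‖ ≤ 1 := by
  rw [gibbsWeight, norm_prod]
  exact Finset.prod_le_one (fun _ _ => norm_nonneg _) fun _ _ => hg _ _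

end GibbsWeight

section OccupancyBox

variable {X ι : Type*} [DecidableEq ι]

/-- The configurations for which `S` is the set of labels of the particles lying in `A`. -/
def occupancyBox (A : Set X) (S : Finset ι) : Set (ι → X) :=
  Set.univ.pi fun i => if i ∈ S then A else Aᶜ

theorem mem_occupancyBox {A : Set X} {S : Finset ι} {x : ι → X} :
    x ∈ occupancyBox A S ↔ ∀ i, x i ∈ A ↔ i ∈ S := by
  simp only [occupancyBox, Set.mem_univ_pi]
  refine forall_congr' fun i => ?_
  split_ifs with h <;> simp [h]

theorem pairwise_disjoint_occupancyBox (A : Set X) :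
    Pairwise (Function.onFun Disjoint fun S : Finset ι => occupancyBox A S) :=
  fun _ _ hST => Set.disjoint_left.2 fun _ hS hT =>
    hST <| Finset.ext fun i => (mem_occupancyBox.1 hS i).symm.trans (mem_occupancyBox.1 hT i)

theorem iUnion_occupancyBox [Finite ι] (A : Set X) :
    ⋃ S : Finset ι, occupancyBox A S = Set.univ := by
  refine Set.eq_univ_of_forall fun x => Set.mem_iUnion.2
    ⟨(Set.toFinite {i | x i ∈ A}).toFinset, mem_occupancyBox.2 fun i => ?_⟩
  rw [Set.Finite.mem_toFinset, Set.mem_ofPred_eq]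

theorem measurableSet_occupancyBox [MeasurableSpace X] [Countable ι] {A : Set X}
    (hA : MeasurableSet A) (S : Finset ι) : MeasurableSet (occupancyBox A S) := by
  refine .univ_pi fun i => ?_
  split_ifs
  exacts [hA, hA.compl]

end OccupancyBox

section PartitionFunction

variable {X Y ι κ : Type*} [MeasurableSpace X] [MeasurableSpace Y] [Fintype ι] [LinearOrder ι]
  [Fintype κ] [LinearOrder κ] {g : X → X → ℂ}

/-- The canonical partition function of particles labelled by `ι` with pair kernel `g` and
reference measure `m`. -/
noncomputable def canonicalPartition (ι : Type*) [Fintype ι] [LinearOrder ι] (m : Measure X)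
    (g : X → X → ℂ) : ℂ :=
  ∫ x : ι → X, gibbsWeight g x ∂Measure.pi fun _ => m

/-- The grand canonical partition function with pair kernel `g`, reference measure `m` and
fugacity `f`. -/
noncomputable def grandPartition (m : Measure X) (g : X → X → ℂ) (f : ℂ) : ℂ :=
  ∑' N : ℕ, canonicalPartition (Fin N) m g * f ^ N / (N.factorial : ℂ)

theorem measurable_gibbsWeight (hg : Measurable (Function.uncurry g)) :
    Measurable (gibbsWeight g : (ι → X) → ℂ) :=
  Finset.measurable_prod _ fun q _ =>
    hg.comp (f := fun x : ι → X => (x q.1, x q.2))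
      ((measurable_pi_apply q.1).prodMk (measurable_pi_apply q.2))

theorem integrable_gibbsWeight (m : Measure X) [IsFiniteMeasure m]
    (hg : Measurable (Function.uncurry g)) (hg₁ : ∀ a b, ‖g a b‖ ≤ 1) :
    Integrable (gibbsWeight g) (Measure.pi fun _ : ι => m) :=
  .of_bound (measurable_gibbsWeight hg).aestronglyMeasurable 1
    (.of_forall (norm_gibbsWeight_le_one hg₁))

theorem canonicalPartition_congr (e : ι ≃o κ) (m : Measure X) [SigmaFinite m] (g : X → X → ℂ) :
    canonicalPartition ι m g = canonicalPartition κ m g := by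
  rw [canonicalPartition, canonicalPartition,
    ← (measurePreserving_piCongrLeft (fun _ : κ => m) e.toEquiv).integral_comp']
  refine integral_congr_ae (.of_forall fun x => ?_)
  beta_reduce
  rw [← gibbsWeight_comp_orderIso e]
  congr 1
  ext i
  exact (MeasurableEquiv.piCongrLeft_apply_apply e.toEquiv (β := fun _ => X) x i).symm

theorem canonicalPartition_map (m : Measure X) [IsFiniteMeasure m] {φ : X → Y} (hφ : Measurable φ)
    {h : Y → Y → ℂ} (hh : Measurable (Function.uncurry h)) :
    canonicalPartition ι (m.map φ) h = canonicalPartition ι m fun a b => h (φ a) (φ b) := by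
  rw [canonicalPartition, ← Measure.pi_map_pi fun _ => hφ.aemeasurable, integral_map]
  · rfl
  · exact (measurable_pi_lambda _ fun i => hφ.comp (measurable_pi_apply i)).aemeasurable
  · exact (measurable_gibbsWeight hh).aestronglyMeasurable

theorem canonicalPartition_smul (c : NNReal) (m : Measure X) [SigmaFinite m] (g : X → X → ℂ) :
    canonicalPartition ι (c • m) g = (c : ℂ) ^ Fintype.card ι * canonicalPartition ι m g := by
  have hpi : Measure.pi (fun _ : ι => c • m) =
      (c ^ Fintype.card ι) • Measure.pi (fun _ : ι => m) := by
    refine Measure.pi_eq fun s _ => ?_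
    simp only [Measure.smul_apply, Measure.pi_pi, ENNReal.smul_def, smul_eq_mul,
      Finset.prod_mul_distrib, Finset.prod_const, Finset.card_univ, ENNReal.coe_pow]
  rw [canonicalPartition, hpi, integral_smul_nnreal_measure, canonicalPartition, NNReal.smul_def,
    NNReal.coe_pow, Complex.real_smul, Complex.ofReal_pow]

theorem canonicalPartition_restrict_congr (m : Measure X) [SigmaFinite m] {A : Set X}
    (hA : MeasurableSet A) {h : X → X → ℂ} (hgh : ∀ a ∈ A, ∀ b ∈ A, g a b = h a b) :
    canonicalPartition ι (m.restrict A) g = canonicalPartition ι (m.restrict A) h := by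
  rw [canonicalPartition, canonicalPartition, ← Measure.restrict_pi_pi]
  exact setIntegral_congr_fun (.univ_pi fun _ => hA) fun x hx =>
    gibbsWeight_congr (fun i => hx i trivial) hgh

theorem norm_canonicalPartition_le (m : Measure X) [IsFiniteMeasure m]
    (hg : ∀ a b, ‖g a b‖ ≤ 1) :
    ‖canonicalPartition ι m g‖ ≤ m.real Set.univ ^ Fintype.card ι := by
  have h := norm_integral_le_of_norm_le_const (μ := Measure.pi fun _ : ι => m)
    (.of_forall (norm_gibbsWeight_le_one hg))
  simpa [canonicalPartition, measureReal_def, Measure.pi_univ] using h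

theorem summable_norm_grandPartition (m : Measure X) [IsFiniteMeasure m]
    (hg : ∀ a b, ‖g a b‖ ≤ 1) (f : ℂ) :
    Summable fun N : ℕ => ‖canonicalPartition (Fin N) m g * f ^ N / (N.factorial : ℂ)‖ := by
  refine .of_nonneg_of_le (fun _ => norm_nonneg _) (fun N => ?_)
    (Real.summable_pow_div_factorial (m.real Set.univ * ‖f‖))
  rw [norm_div, norm_mul, norm_pow, Complex.norm_natCast, mul_pow]
  gcongr
  simpa using norm_canonicalPartition_le (ι := Fin N) m hg

theorem setIntegral_occupancyBox (m : Measure X) [SigmaFinite m] {A : Set X}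
    (hA : MeasurableSet A) (hg : ∀ a ∈ A, ∀ b ∉ A, g a b = 1 ∧ g b a = 1) (S : Finset ι) :
    ∫ x in occupancyBox A S, gibbsWeight g x ∂(Measure.pi fun _ => m) =
      canonicalPartition {i // i ∈ S} (m.restrict A) g *
        canonicalPartition {i // i ∉ S} (m.restrict Aᶜ) g := by
  have hsplit : ∀ x ∈ occupancyBox A S, gibbsWeight g x =
      gibbsWeight g (fun i : {i // i ∈ S} => x i) *
        gibbsWeight g (fun i : {i // i ∉ S} => x i) := fun x hx =>
    gibbsWeight_eq_mul S fun i hi j hj =>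
      hg _ ((mem_occupancyBox.1 hx i).2 hi) _ (mt (mem_occupancyBox.1 hx j).1 hj)
  rw [setIntegral_congr_fun (measurableSet_occupancyBox hA S) hsplit, occupancyBox,
    Measure.restrict_pi_pi]
  have hmp := measurePreserving_piEquivPiSubtypeProd (α := fun _ : ι => X)
    (fun i => m.restrict (if i ∈ S then A else Aᶜ)) (· ∈ S)
  refine (hmp.integral_comp' fun z => gibbsWeight g z.1 * gibbsWeight g z.2).trans ?_
  rw [integral_prod_mul]
  have hin (i : {i // i ∈ S}) : m.restrict (if i.1 ∈ S then A else Aᶜ) = m.restrict A := by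
    rw [if_pos i.2]
  have hout (i : {i // i ∉ S}) : m.restrict (if i.1 ∈ S then A else Aᶜ) = m.restrict Aᶜ := by
    rw [if_neg i.2]
  simp only [hin, hout, canonicalPartition]
  congr!

theorem canonicalPartition_eq_sum (m : Measure X) [IsFiniteMeasure m] {A : Set X}
    (hA : MeasurableSet A) (hg : Measurable (Function.uncurry g)) (hg₁ : ∀ a b, ‖g a b‖ ≤ 1)
    (hgA : ∀ a ∈ A, ∀ b ∉ A, g a b = 1 ∧ g b a = 1) :
    canonicalPartition ι m g = ∑ S : Finset ι,
      canonicalPartition {i // i ∈ S} (m.restrict A) g *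
        canonicalPartition {i // i ∉ S} (m.restrict Aᶜ) g := by
  simp only [← setIntegral_occupancyBox m hA hgA]
  rw [← integral_iUnion_fintype (measurableSet_occupancyBox hA) (pairwise_disjoint_occupancyBox A)
    fun S => (integrable_gibbsWeight m hg hg₁).integrableOn, iUnion_occupancyBox, setIntegral_univ,
    canonicalPartition]

theorem canonicalPartition_fin_eq_sum (m : Measure X) [IsFiniteMeasure m] {A : Set X}
    (hA : MeasurableSet A) (hg : Measurable (Function.uncurry g)) (hg₁ : ∀ a b, ‖g a b‖ ≤ 1)
    (hgA : ∀ a ∈ A, ∀ b ∉ A, g a b = 1 ∧ g b a = 1) (N : ℕ) :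
    canonicalPartition (Fin N) m g = ∑ S : Finset (Fin N),
      canonicalPartition (Fin S.card) (m.restrict A) g *
        canonicalPartition (Fin (N - S.card)) (m.restrict Aᶜ) g := by
  rw [canonicalPartition_eq_sum m hA hg hg₁ hgA]
  refine Finset.sum_congr rfl fun S _ => ?_
  have hcard : Fintype.card {i // i ∉ S} = N - S.card := by
    rw [Fintype.card_subtype_compl, Fintype.card_fin, Fintype.card_coe]
  rw [canonicalPartition_congr (S.orderIsoOfFin rfl),
    canonicalPartition_congr (Fintype.orderIsoFinOfCardEq _ hcard)]

theorem sum_mul_card_div_factorial {K : Type*} [Field K] [CharZero K] (a b : ℕ → K) (N : ℕ) :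
    (∑ S : Finset (Fin N), a S.card * b (N - S.card)) / (N.factorial : K) =
      ∑ kl ∈ Finset.HasAntidiagonal.antidiagonal N,
        a kl.1 / (kl.1.factorial : K) * (b kl.2 / (kl.2.factorial : K)) := by
  have hsum := Finset.sum_powerset_apply_card (fun k => a k * b (N - k))
    (x := (Finset.univ : Finset (Fin N)))
  rw [Finset.powerset_univ, Finset.card_univ, Fintype.card_fin] at hsum
  rw [hsum, Finset.Nat.sum_antidiagonal_eq_sum_range_succ_mk, Finset.sum_div]
  refine Finset.sum_congr rfl fun k hk => ?_
  have hN : (N.factorial : K) ≠ 0 := mod_cast N.factorial_ne_zero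
  rw [nsmul_eq_mul, Nat.cast_choose K (Nat.lt_succ_iff.1 (Finset.mem_range.1 hk))]
  field_simp

theorem grandPartition_eq_mul (m : Measure X) [IsFiniteMeasure m] {A : Set X}
    (hA : MeasurableSet A) (hg : Measurable (Function.uncurry g)) (hg₁ : ∀ a b, ‖g a b‖ ≤ 1)
    (hgA : ∀ a ∈ A, ∀ b ∉ A, g a b = 1 ∧ g b a = 1) (f : ℂ) :
    grandPartition m g f =
      grandPartition (m.restrict A) g f * grandPartition (m.restrict Aᶜ) g f := by
  rw [grandPartition, grandPartition, grandPartition,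
    tsum_mul_tsum_eq_tsum_sum_antidiagonal_of_summable_norm
      (summable_norm_grandPartition _ hg₁ f) (summable_norm_grandPartition _ hg₁ f)]
  refine tsum_congr fun N => ?_
  rw [canonicalPartition_fin_eq_sum m hA hg hg₁ hgA, Finset.sum_mul, ← sum_mul_card_div_factorial
    (fun k => canonicalPartition (Fin k) (m.restrict A) g * f ^ k)
    fun l => canonicalPartition (Fin l) (m.restrict Aᶜ) g * f ^ l]
  congr 1
  refine Finset.sum_congr rfl fun S _ => ?_
  rw [mul_mul_mul_comm, ← pow_add, Nat.add_sub_cancel' (by simpa using S.card_le_univ)]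

end PartitionFunction

section ProjectiveLine

variable {p : ℕ} [Fact p.Prime]

theorem sdelta_comm (v w : Fin 2 → ℚ_[p]) : sdelta p v w = sdelta p w v := by
  rw [sdelta, sdelta, norm_sub_rev, mul_comm (v 0), mul_comm (v 1), mul_comm (max _ _)]

theorem sdelta_smul_left {a : ℚ_[p]} (ha : a ≠ 0) (v w : Fin 2 → ℚ_[p]) :
    sdelta p (a • v) w = sdelta p v w := by
  simp only [sdelta, Pi.smul_apply, smul_eq_mul, norm_mul, mul_assoc, ← mul_sub,
    ← mul_max_of_nonneg _ _ (norm_nonneg a)]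
  exact mul_div_mul_left _ _ (norm_ne_zero_iff.2 ha)

theorem sdelta_smul_right {a : ℚ_[p]} (ha : a ≠ 0) (v w : Fin 2 → ℚ_[p]) :
    sdelta p v (a • w) = sdelta p v w := by
  rw [sdelta_comm, sdelta_smul_left ha, sdelta_comm]

theorem sdelta_nonneg (v w : Fin 2 → ℚ_[p]) : 0 ≤ sdelta p v w :=
  div_nonneg (norm_nonneg _) (by positivity)

theorem sdelta_le_one (v w : Fin 2 → ℚ_[p]) : sdelta p v w ≤ 1 := by
  refine div_le_one_of_le₀ ?_ (by positivity)
  rw [sub_eq_add_neg]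
  refine (Padic.nonarchimedean _ _).trans ?_
  rw [norm_neg, norm_mul, norm_mul]
  exact max_le
    (mul_le_mul (le_max_left _ _) (le_max_right _ _) (norm_nonneg _) (by positivity))
    (mul_le_mul (le_max_right _ _) (le_max_left _ _) (norm_nonneg _) (by positivity))

theorem pdelta_mk {v w : Fin 2 → ℚ_[p]} (hv : v ≠ 0) (hw : w ≠ 0) :
    pdelta p (Projectivization.mk ℚ_[p] v hv) (Projectivization.mk ℚ_[p] w hw) = sdelta p v w := by
  obtain ⟨a, ha⟩ := Projectivization.exists_smul_eq_mk_rep ℚ_[p] v hv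
  obtain ⟨b, hb⟩ := Projectivization.exists_smul_eq_mk_rep ℚ_[p] w hw
  rw [pdelta, ← ha, ← hb, Units.smul_def, Units.smul_def, sdelta_smul_left a.ne_zero,
    sdelta_smul_right b.ne_zero]

theorem isQuotientMap_mk' :
    Topology.IsQuotientMap (Projectivization.mk' ℚ_[p] : {v : Fin 2 → ℚ_[p] // v ≠ 0} → P1 p) :=
  isQuotientMap_quotient_mk'

theorem mulVec_ne_zero {A : Matrix (Fin 2) (Fin 2) ℚ_[p]} (hA : A.det ≠ 0)
    {v : Fin 2 → ℚ_[p]} (hv : v ≠ 0) : A.mulVec v ≠ 0 :=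
  fun h => hv (Matrix.eq_zero_of_mulVec_eq_zero hA h)

theorem mobius_mk {A : Matrix (Fin 2) (Fin 2) ℚ_[p]} (hA : A.det ≠ 0)
    {v : Fin 2 → ℚ_[p]} (hv : v ≠ 0) :
    mobius p A (Projectivization.mk ℚ_[p] v hv) =
      Projectivization.mk ℚ_[p] (A.mulVec v) (mulVec_ne_zero hA hv) := by
  obtain ⟨a, ha⟩ := Projectivization.exists_smul_eq_mk_rep ℚ_[p] v hv
  rw [mobius, dif_pos (mulVec_ne_zero hA (Projectivization.rep_nonzero _)),
    Projectivization.mk_eq_mk_iff]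
  exact ⟨a, by rw [← ha, Units.smul_def, Units.smul_def, Matrix.mulVec_smul]⟩

theorem continuous_mobius {A : Matrix (Fin 2) (Fin 2) ℚ_[p]} (hA : A.det ≠ 0) :
    Continuous (mobius p A) := by
  rw [isQuotientMap_mk'.continuous_iff]
  have hlift : mobius p A ∘ Projectivization.mk' ℚ_[p] = Projectivization.mk' ℚ_[p] ∘
      fun v : {v : Fin 2 → ℚ_[p] // v ≠ 0} => ⟨A.mulVec v, mulVec_ne_zero hA v.2⟩ :=
    funext fun v => mobius_mk hA v.2
  rw [hlift]
  exact isQuotientMap_mk'.continuous.comp (by fun_prop)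

theorem mobius_surjective {A : Matrix (Fin 2) (Fin 2) ℚ_[p]} (hA : A.det ≠ 0) :
    Function.Surjective (mobius p A) := by
  intro ξ
  induction ξ using Projectivization.ind with | h v hv =>
  have hA' : A⁻¹.det ≠ 0 := by simpa [Matrix.det_nonsing_inv] using hA
  refine ⟨Projectivization.mk ℚ_[p] (A⁻¹.mulVec v) (mulVec_ne_zero hA' hv), ?_⟩
  simp only [mobius_mk hA, Matrix.mulVec_mulVec, Matrix.mul_nonsing_inv A hA.isUnit,
    Matrix.one_mulVec]

theorem measurePreserving_mobius {ν : Measure (P1 p)} (hν : IsGLInvariant p ν)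
    {A : Matrix (Fin 2) (Fin 2) ℚ_[p]} (hA : ∀ i j, ‖A i j‖ ≤ 1) (hdet : ‖A.det‖ = 1) :
    MeasurePreserving (mobius p A) ν ν := by
  have hdet' : A.det ≠ 0 := norm_ne_zero_iff.1 (hdet ▸ one_ne_zero)
  have hmeas := (continuous_mobius hdet').measurable
  refine ⟨hmeas, Measure.ext fun M hM => ?_⟩
  rw [Measure.map_apply hmeas hM, ← hν A hA hdet _ (hmeas hM),
    Set.image_preimage_eq _ (mobius_surjective hdet')]

theorem mk_eq_iota_iff {v : Fin 2 → ℚ_[p]} (hv : v ≠ 0) {x : ℚ_[p]} :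
    Projectivization.mk ℚ_[p] v hv = iota p x ↔ v 0 = v 1 * x := by
  rw [iota, Projectivization.mk_eq_mk_iff']
  constructor
  · rintro ⟨a, rfl⟩
    simp
  · intro h
    refine ⟨v 1, funext fun i => ?_⟩
    fin_cases i <;> simp [h]

theorem continuous_iota : Continuous (iota p) := by
  have hvec : Continuous fun x : ℚ_[p] => ![x, 1] := by fun_prop
  exact isQuotientMap_mk'.continuous.comp (hvec.subtype_mk fun x h => by simpa using congrFun h 1)

theorem mk_mem_image_iota {v : Fin 2 → ℚ_[p]} (hv : v ≠ 0) {S : Set ℚ_[p]} :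
    Projectivization.mk ℚ_[p] v hv ∈ iota p '' S ↔ v 1 ≠ 0 ∧ v 0 / v 1 ∈ S := by
  simp only [Set.mem_image, eq_comm (b := Projectivization.mk _ _ _), mk_eq_iota_iff]
  constructor
  · rintro ⟨x, hx, h⟩
    have h1 : v 1 ≠ 0 := fun h1 => hv (funext fun i => by fin_cases i <;> simp [h, h1])
    exact ⟨h1, by rwa [h, mul_div_cancel_left₀ _ h1]⟩
  · rintro ⟨h1, hx⟩
    exact ⟨_, hx, (mul_div_cancel₀ _ h1).symm⟩

theorem iota_injective : Function.Injective (iota p) := fun x y h => by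
  simpa using (mk_eq_iota_iff (v := ![x, 1]) _).1 h

theorem isOpenMap_iota : IsOpenMap (iota p) := fun U hU => by
  rw [← isQuotientMap_mk'.isOpen_preimage]
  have hpre : Projectivization.mk' ℚ_[p] ⁻¹' (iota p '' U) =
      {v | v.1 1 ≠ 0} ∩ (fun v => v.1 0 / v.1 1) ⁻¹' U :=
    Set.ext fun v => mk_mem_image_iota v.2
  have hcoord (i : Fin 2) : Continuous fun v : {v : Fin 2 → ℚ_[p] // v ≠ 0} => v.1 i :=
    (continuous_apply i).comp continuous_subtype_val
  rw [hpre]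
  exact ((hcoord 0).continuousOn.div (hcoord 1).continuousOn fun _ hv => hv).isOpen_inter_preimage
    (isOpen_ne_fun (hcoord 1) continuous_const) hU

theorem measurableEmbedding_iota : MeasurableEmbedding (iota p) :=
  (Topology.IsOpenEmbedding.of_continuous_injective_isOpenMap continuous_iota iota_injective
    isOpenMap_iota).measurableEmbedding

theorem mk_mem_image_iota_Zball {v : Fin 2 → ℚ_[p]} (hv : v ≠ 0) :
    Projectivization.mk ℚ_[p] v hv ∈ iota p '' Zball p ↔ ‖v 0‖ ≤ ‖v 1‖ := by
  rw [mk_mem_image_iota, Zball, Set.mem_ofPred_eq, norm_div]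
  constructor
  · rintro ⟨h1, h⟩
    exact (div_le_one (norm_pos_iff.2 h1)).1 h
  · intro h
    have h1 : v 1 ≠ 0 := fun h1 => hv (funext fun i => by fin_cases i <;> simp_all)
    exact ⟨h1, (div_le_one (norm_pos_iff.2 h1)).2 h⟩

theorem mk_mem_image_iota_Pball {v : Fin 2 → ℚ_[p]} (hv : v ≠ 0) :
    Projectivization.mk ℚ_[p] v hv ∈ iota p '' Pball p ↔ ‖v 0‖ < ‖v 1‖ := by
  rw [mk_mem_image_iota, Pball, Set.mem_ofPred_eq, norm_div]
  constructor
  · rintro ⟨h1, h⟩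
    exact (div_lt_one (norm_pos_iff.2 h1)).1 h
  · intro h
    have h1 : 0 < ‖v 1‖ := (norm_nonneg _).trans_lt h
    exact ⟨norm_pos_iff.1 h1, (div_lt_one h1).2 h⟩

/-- The inversion `[x₀ : x₁] ↦ [x₁ : x₀]`, which exchanges the neighbourhoods of `0` and of the
point at infinity. -/
noncomputable def inversion (ξ : P1 p) : P1 p := mobius p !![0, 1; 1, 0] ξ

theorem inversion_mk {v : Fin 2 → ℚ_[p]} (hv : v ≠ 0) :
    inversion (Projectivization.mk ℚ_[p] v hv) = Projectivization.mk ℚ_[p] ![v 1, v 0]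
      fun h => hv (funext fun i => by fin_cases i; exacts [congrFun h 1, congrFun h 0]) := by
  rw [inversion, mobius_mk (by simp)]
  congr 1
  ext i
  fin_cases i <;> simp [Matrix.mulVec, dotProduct]

theorem measurePreserving_inversion {ν : Measure (P1 p)} (hν : IsGLInvariant p ν) :
    MeasurePreserving inversion ν ν :=
  measurePreserving_mobius hν (by simp [Fin.forall_fin_two]) (by simp)

theorem measurable_inversion : Measurable (inversion (p := p)) :=
  (continuous_mobius (by simp)).measurable

theorem inversion_preimage_image_iota_Pball :
    inversion ⁻¹' (iota p '' Pball p) = (iota p '' Zball p)ᶜ := by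
  ext ξ
  induction ξ using Projectivization.ind with | h v hv =>
  rw [Set.mem_preimage, inversion_mk hv, Set.mem_compl_iff, mk_mem_image_iota_Zball,
    mk_mem_image_iota_Pball, not_le]
  rfl

theorem pdelta_comm (ξ η : P1 p) : pdelta p ξ η = pdelta p η ξ :=
  sdelta_comm _ _

theorem pdelta_inversion (ξ η : P1 p) : pdelta p (inversion ξ) (inversion η) = pdelta p ξ η := by
  induction ξ using Projectivization.ind with | h v hv =>
  induction η using Projectivization.ind with | h w hw =>
  rw [inversion_mk, inversion_mk, pdelta_mk, pdelta_mk, sdelta, sdelta, max_comm ‖v 0‖,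
    max_comm ‖w 0‖, norm_sub_rev]
  rfl

theorem pdelta_iota {x y : ℚ_[p]} (hx : x ∈ Zball p) (hy : y ∈ Zball p) :
    pdelta p (iota p x) (iota p y) = ‖x - y‖ := by
  have hx : ‖x‖ ≤ 1 := hx
  have hy : ‖y‖ ≤ 1 := hy
  rw [iota, iota, pdelta_mk, sdelta]
  simp [hx, hy]

theorem pdelta_eq_one {ξ η : P1 p} (hξ : ξ ∈ iota p '' Zball p) (hη : η ∉ iota p '' Zball p) :
    pdelta p ξ η = 1 := by
  induction ξ using Projectivization.ind with | h v hv =>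
  induction η using Projectivization.ind with | h w hw =>
  have hv1 : ‖v 1‖ ≠ 0 := norm_ne_zero_iff.2 ((mk_mem_image_iota hv).1 hξ).1
  rw [mk_mem_image_iota_Zball] at hξ hη
  have hlt : ‖v 0 * w 1‖ < ‖v 1 * w 0‖ := by
    rw [norm_mul, norm_mul]
    exact mul_lt_mul' hξ (not_le.1 hη) (norm_nonneg _) (by positivity)
  have hnum : ‖v 0 * w 1 - v 1 * w 0‖ = ‖v 1‖ * ‖w 0‖ := by
    rw [sub_eq_add_neg, Padic.add_eq_max_of_ne (by rw [norm_neg]; exact hlt.ne), norm_neg,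
      max_eq_right hlt.le, norm_mul]
  rw [pdelta_mk, sdelta, hnum, max_eq_right hξ, max_eq_left (not_le.1 hη).le]
  exact div_self (mul_ne_zero hv1 ((norm_nonneg _).trans_lt (not_le.1 hη)).ne')

theorem Pball_subset_Zball : Pball p ⊆ Zball p := fun _ => le_of_lt (α := ℝ)

theorem isOpen_Zball : IsOpen (Zball p) := by
  simpa [Zball, Metric.closedBall] using IsUltrametricDist.isOpen_closedBall (0 : ℚ_[p]) one_ne_zero

theorem isOpen_Pball : IsOpen (Pball p) :=
  isOpen_lt continuous_norm continuous_const

open Classical in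
theorem measurable_pdelta : Measurable (Function.uncurry (pdelta p)) := by
  obtain ⟨c, hc, hcι⟩ := measurableEmbedding_iota.exists_measurable_extend
    (measurable_id (α := ℚ_[p])) fun _ => inferInstance
  have hD : MeasurableSet (iota p '' Zball p) :=
    measurableEmbedding_iota.measurableSet_image.2 isOpen_Zball.measurableSet
  have hnear {ξ η : P1 p} (hξ : ξ ∈ iota p '' Zball p) (hη : η ∈ iota p '' Zball p) :
      pdelta p ξ η = ‖c ξ - c η‖ := by
    obtain ⟨x, hx, rfl⟩ := hξ
    obtain ⟨y, hy, rfl⟩ := hη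
    rw [pdelta_iota hx hy]
    exact congrArg norm (congrArg₂ _ (congrFun hcι x).symm (congrFun hcι y).symm)
  have hfar {ξ : P1 p} (hξ : ξ ∉ iota p '' Zball p) : inversion ξ ∈ iota p '' Zball p := by
    rw [← Set.mem_compl_iff, ← inversion_preimage_image_iota_Pball] at hξ
    exact Set.image_mono Pball_subset_Zball hξ
  have hpw : Function.uncurry (pdelta p) = fun z =>
      if z.1 ∈ iota p '' Zball p then
        if z.2 ∈ iota p '' Zball p then ‖c z.1 - c z.2‖ else 1
      else if z.2 ∈ iota p '' Zball p then 1
        else ‖c (inversion z.1) - c (inversion z.2)‖ := by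
    ext ⟨ξ, η⟩
    split_ifs with hξ hη hη
    · exact hnear hξ hη
    · exact pdelta_eq_one hξ hη
    · exact (pdelta_comm ξ η).trans (pdelta_eq_one hη hξ)
    · exact (pdelta_inversion ξ η).symm.trans (hnear (hfar hξ) (hfar hη))
  have hJ := measurable_inversion (p := p)
  rw [hpw]
  exact .ite (measurable_fst hD)
    (.ite (measurable_snd hD) (by fun_prop) measurable_const)
    (.ite (measurable_snd hD) measurable_const (by fun_prop))

end ProjectiveLine

section TranslationInvariance

open Measure

variable {G : Type*} [MeasurableSpace G]

theorem conv_eq_measure_univ_smul [AddMonoid G] [MeasurableAdd₂ G] {m₁ m₂ : Measure G}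
    [SFinite m₂] (h : ∀ᵐ x ∂m₁, m₂.map (x + ·) = m₂) : m₁.conv m₂ = m₁ Set.univ • m₂ := by
  ext S hS
  have hslice : ∀ᵐ x ∂m₁, ∫⁻ y, S.indicator 1 (x + y) ∂m₂ = m₂ S := by
    filter_upwards [h] with x hx
    rw [← lintegral_map (measurable_one.indicator hS) (measurable_const_add x), hx,
      lintegral_indicator_one hS]
  rw [← lintegral_indicator_one hS, lintegral_conv (measurable_one.indicator hS),
    lintegral_congr_ae hslice, lintegral_const, Measure.smul_apply, smul_eq_mul, mul_comm]

theorem measure_univ_smul_comm [AddCommMonoid G] [MeasurableAdd₂ G] {m₁ m₂ : Measure G}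
    [SFinite m₁] [SFinite m₂] (h₁ : ∀ᵐ x ∂m₂, m₁.map (x + ·) = m₁)
    (h₂ : ∀ᵐ x ∂m₁, m₂.map (x + ·) = m₂) : m₁ Set.univ • m₂ = m₂ Set.univ • m₁ := by
  rw [← conv_eq_measure_univ_smul h₂, conv_comm, conv_eq_measure_univ_smul h₁]

theorem map_add_left_restrict [Add G] [MeasurableAdd G] {m : Measure G} {b : G} {S : Set G}
    (hS : MeasurableSet S) (hm : m.map (b + ·) = m) (hb : (b + ·) ⁻¹' S = S) :
    (m.restrict S).map (b + ·) = m.restrict S := by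
  have hpres := MeasurePreserving.restrict_preimage ⟨measurable_const_add b, hm⟩ hS
  rw [hb] at hpres
  exact hpres.map_eq

end TranslationInvariance

section InvariantMeasure

variable {p : ℕ} [Fact p.Prime]

theorem add_mem_Zball {x y : ℚ_[p]} (hx : x ∈ Zball p) (hy : y ∈ Zball p) : x + y ∈ Zball p :=
  (Padic.nonarchimedean x y).trans (max_le hx hy)

theorem neg_mem_Zball {x : ℚ_[p]} (hx : x ∈ Zball p) : -x ∈ Zball p :=
  (norm_neg x).trans_le hx

theorem natCast_mem_Zball (n : ℕ) : (n : ℚ_[p]) ∈ Zball p := by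
  rw [Zball, Set.mem_ofPred_eq]
  exact_mod_cast Padic.norm_int_le_one (p := p) n

theorem add_left_preimage_Zball {b : ℚ_[p]} (hb : b ∈ Zball p) :
    (b + ·) ⁻¹' Zball p = Zball p :=
  Set.ext fun x => ⟨fun hx => by simpa using add_mem_Zball (neg_mem_Zball hb) hx,
    add_mem_Zball hb⟩

theorem Zball_eq_iUnion_cosets :
    Zball p = ⋃ k ∈ Finset.range p, (-(k : ℚ_[p]) + ·) ⁻¹' Pball p := by
  ext x
  simp only [Set.mem_iUnion, Set.mem_preimage, Finset.mem_range, exists_prop]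
  constructor
  · intro hx
    obtain ⟨z, rfl⟩ : ∃ z : ℤ_[p], (z : ℚ_[p]) = x := ⟨⟨x, hx⟩, rfl⟩
    obtain ⟨n, hn, hzn⟩ := PadicInt.exists_mem_range z
    rw [IsLocalRing.mem_maximalIdeal, PadicInt.mem_nonunits, PadicInt.norm_def, PadicInt.coe_sub,
      PadicInt.coe_natCast] at hzn
    exact ⟨n, hn, by rwa [neg_add_eq_sub]⟩
  · rintro ⟨n, -, hxn⟩
    simpa using add_mem_Zball (natCast_mem_Zball n) (Pball_subset_Zball hxn)

theorem pairwiseDisjoint_cosets :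
    (Finset.range p : Set ℕ).PairwiseDisjoint fun k => (-(k : ℚ_[p]) + ·) ⁻¹' Pball p := by
  intro k hk l hl hkl
  refine Set.disjoint_left.2 fun x hxk hxl => hkl ?_
  have hnorm : ‖(((k : ℤ) - l : ℤ) : ℚ_[p])‖ < 1 := by
    have hdiff : (((k : ℤ) - l : ℤ) : ℚ_[p]) = (-(l : ℚ_[p]) + x) + -(-(k : ℚ_[p]) + x) := by
      push_cast
      ring
    rw [hdiff]
    exact (Padic.nonarchimedean _ _).trans_lt (max_lt hxl ((norm_neg _).trans_lt hxk))
  rw [Padic.norm_intCast_lt_one_iff] at hnorm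
  have hk := Finset.mem_range.1 hk
  have hl := Finset.mem_range.1 hl
  have := Int.eq_zero_of_abs_lt_dvd hnorm (by rw [abs_lt]; omega)
  omega

theorem measure_Zball (μ : Measure ℚ_[p]) [μ.IsAddLeftInvariant] :
    μ (Zball p) = p * μ (Pball p) := by
  rw [Zball_eq_iUnion_cosets, measure_biUnion_finset pairwiseDisjoint_cosets fun _ _ =>
    measurable_const_add _ isOpen_Pball.measurableSet]
  simp only [measure_preimage_add, Finset.sum_const, Finset.card_range, nsmul_eq_mul]

theorem mobius_translation_iota (b x : ℚ_[p]) :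
    mobius p !![1, b; 0, 1] (iota p x) = iota p (b + x) := by
  rw [iota, mobius_mk (by simp), mk_eq_iota_iff]
  simp [Matrix.mulVec, dotProduct, add_comm]

theorem map_add_left_comap_iota {ν : Measure (P1 p)} (hν : IsGLInvariant p ν) {b : ℚ_[p]}
    (hb : b ∈ Zball p) : (ν.comap (iota p)).map (b + ·) = ν.comap (iota p) := by
  ext S hS
  have hpre : MeasurableSet ((b + ·) ⁻¹' S) := measurable_const_add b hS
  have himage : mobius p !![1, b; 0, 1] '' (iota p '' ((b + ·) ⁻¹' S)) = iota p '' S := by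
    rw [Set.image_image]
    simp only [mobius_translation_iota]
    rw [← Set.image_image (iota p) (b + ·), Set.image_preimage_eq S (add_left_surjective b)]
  rw [Measure.map_apply (measurable_const_add b) hS, measurableEmbedding_iota.comap_apply,
    measurableEmbedding_iota.comap_apply, ← himage]
  refine (hν _ ?_ (by simp) _ (measurableEmbedding_iota.measurableSet_image.2 hpre)).symm
  have hb : ‖b‖ ≤ 1 := hb
  simp [Fin.forall_fin_two, hb]

variable {μ : Measure ℚ_[p]} {ν : Measure (P1 p)}

theorem comap_iota_restrict_Zball [μ.IsAddLeftInvariant] (hμ : μ (Zball p) = 1)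
    [IsFiniteMeasure ν] (hν : IsGLInvariant p ν) :
    (ν.comap (iota p)).restrict (Zball p) = ν (iota p '' Zball p) • μ.restrict (Zball p) := by
  have hZ : MeasurableSet (Zball p) := isOpen_Zball.measurableSet
  have : IsFiniteMeasure (μ.restrict (Zball p)) := ⟨by simp [hμ]⟩
  have huniq := measure_univ_smul_comm
    (m₁ := μ.restrict (Zball p)) (m₂ := (ν.comap (iota p)).restrict (Zball p))
    (ae_restrict_of_forall_mem hZ fun b hb =>
      map_add_left_restrict hZ (map_add_left_eq_self μ b) (add_left_preimage_Zball hb))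
    (ae_restrict_of_forall_mem hZ fun b hb =>
      map_add_left_restrict hZ (map_add_left_comap_iota hν hb) (add_left_preimage_Zball hb))
  rwa [Measure.restrict_apply_univ, Measure.restrict_apply_univ, hμ, one_smul,
    measurableEmbedding_iota.comap_apply] at huniq

theorem restrict_image_iota [μ.IsAddLeftInvariant] (hμ : μ (Zball p) = 1)
    [IsFiniteMeasure ν] (hν : IsGLInvariant p ν) {S : Set ℚ_[p]} (hS : S ⊆ Zball p) :
    ν.restrict (iota p '' S) = ν (iota p '' Zball p) • (μ.restrict S).map (iota p) :=
  calc ν.restrict (iota p '' S)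
      = ((ν.comap (iota p)).map (iota p)).restrict (iota p '' S) := by
        rw [measurableEmbedding_iota.map_comap,
          Measure.restrict_restrict_of_subset (Set.image_subset_range _ _)]
    _ = (((ν.comap (iota p)).restrict (Zball p)).restrict S).map (iota p) := by
        rw [measurableEmbedding_iota.restrict_map, Set.preimage_image_eq _ iota_injective,
          Measure.restrict_restrict_of_subset hS]
    _ = ν (iota p '' Zball p) • (μ.restrict S).map (iota p) := by
        rw [comap_iota_restrict_Zball hμ hν, Measure.restrict_smul, Measure.map_smul,
          Measure.restrict_restrict_of_subset hS]

theorem map_inversion_restrict_compl (hν : IsGLInvariant p ν) :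
    (ν.restrict (iota p '' Zball p)ᶜ).map inversion = ν.restrict (iota p '' Pball p) := by
  rw [← inversion_preimage_image_iota_Pball]
  exact ((measurePreserving_inversion hν).restrict_preimage
    (measurableEmbedding_iota.measurableSet_image.2 isOpen_Pball.measurableSet)).map_eq

theorem measure_compl_image_iota_Zball [μ.IsAddLeftInvariant] (hμ : μ (Zball p) = 1)
    [IsFiniteMeasure ν] (hν : IsGLInvariant p ν) :
    ν (iota p '' Zball p)ᶜ = ν (iota p '' Zball p) * μ (Pball p) := by
  have huniv := congrArg (· Set.univ) (map_inversion_restrict_compl hν)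
  rw [restrict_image_iota hμ hν Pball_subset_Zball] at huniv
  simpa [Measure.map_apply, measurable_inversion, continuous_iota.measurable] using huniv

theorem measure_image_iota_Zball [μ.IsAddLeftInvariant] (hμ : μ (Zball p) = 1)
    [IsProbabilityMeasure ν] (hν : IsGLInvariant p ν) :
    ν (iota p '' Zball p) = ((p / (p + 1) : NNReal) : ENNReal) := by
  have hp : (p : ENNReal) ≠ 0 := Nat.cast_ne_zero.2 (NeZero.ne p)
  have hP : μ (Pball p) = (p : ENNReal)⁻¹ :=
    ENNReal.eq_inv_of_mul_eq_one_left (by rw [mul_comm, ← measure_Zball, hμ])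
  have hsum := prob_add_prob_compl (μ := ν)
    (measurableEmbedding_iota.measurableSet_image.2 (isOpen_Zball (p := p)).measurableSet)
  rw [measure_compl_image_iota_Zball hμ hν, hP] at hsum
  rw [ENNReal.coe_div (by positivity), ENNReal.coe_add, ENNReal.coe_natCast, ENNReal.coe_one,
    ENNReal.eq_div_iff (by positivity) (by finiteness)]
  calc (p + 1 : ENNReal) * ν (iota p '' Zball p)
      = p * (ν (iota p '' Zball p) + ν (iota p '' Zball p) * (p : ENNReal)⁻¹) := by
        rw [mul_add, mul_left_comm, ENNReal.mul_inv_cancel hp (by finiteness)]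
        ring
    _ = p := by rw [hsum, mul_one]

end InvariantMeasure

section SphericalKernel

theorem norm_ofReal_cpow_le_one {r : ℝ} (hr₀ : 0 ≤ r) (hr₁ : r ≤ 1) {β : ℂ} (hβ : 0 ≤ β.re) :
    ‖(r : ℂ) ^ β‖ ≤ 1 := by
  calc ‖(r : ℂ) ^ β‖ ≤ ‖(r : ℂ)‖ ^ β.re / Real.exp (Complex.arg r * β.im) :=
        Complex.norm_cpow_le _ _
    _ = r ^ β.re := by
        rw [Complex.arg_ofReal_of_nonneg hr₀, zero_mul, Real.exp_zero, div_one,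
          Complex.norm_of_nonneg hr₀]
    _ ≤ 1 := Real.rpow_le_one hr₀ hr₁ hβ

variable {p : ℕ} [Fact p.Prime]

/-- The pair interaction `(ξ, η) ↦ δ(ξ, η) ^ β` of the log-Coulomb gas on the projective line. -/
noncomputable def sphericalKernel (β : ℂ) (ξ η : P1 p) : ℂ := (pdelta p ξ η : ℂ) ^ β

theorem measurable_sphericalKernel (β : ℂ) :
    Measurable (Function.uncurry (sphericalKernel (p := p) β)) :=
  (Complex.measurable_ofReal.comp measurable_pdelta).pow_const β

theorem norm_sphericalKernel_le_one {β : ℂ} (hβ : 0 ≤ β.re) (ξ η : P1 p) :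
    ‖sphericalKernel β ξ η‖ ≤ 1 :=
  norm_ofReal_cpow_le_one (sdelta_nonneg _ _) (sdelta_le_one _ _) hβ

theorem sphericalKernel_eq_one (β : ℂ) {ξ η : P1 p} (hξ : ξ ∈ iota p '' Zball p)
    (hη : η ∉ iota p '' Zball p) : sphericalKernel β ξ η = 1 ∧ sphericalKernel β η ξ = 1 := by
  simp only [sphericalKernel, pdelta_comm η ξ, pdelta_eq_one hξ hη, Complex.ofReal_one,
    Complex.one_cpow, and_self]

theorem sphericalKernel_iota (β : ℂ) {x y : ℚ_[p]} (hx : x ∈ Zball p) (hy : y ∈ Zball p) :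
    sphericalKernel β (iota p x) (iota p y) = (‖x - y‖ : ℂ) ^ β := by
  rw [sphericalKernel, pdelta_iota hx hy]

theorem sphericalKernel_inversion (β : ℂ) (ξ η : P1 p) :
    sphericalKernel β (inversion ξ) (inversion η) = sphericalKernel β ξ η := by
  rw [sphericalKernel, pdelta_inversion, sphericalKernel]

variable {μ : Measure ℚ_[p]} [SigmaFinite μ] [μ.IsAddLeftInvariant]
  {ν : Measure (P1 p)} [IsProbabilityMeasure ν]

theorem canonicalPartition_restrict_image_iota (hμ : μ (Zball p) = 1) (hν : IsGLInvariant p ν)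
    {S : Set ℚ_[p]} (hSm : MeasurableSet S) (hS : S ⊆ Zball p) (β : ℂ) (N : ℕ) :
    canonicalPartition (Fin N) (ν.restrict (iota p '' S)) (sphericalKernel β) =
      (p / (p + 1)) ^ N * ZN p μ S N β := by
  have : IsFiniteMeasure (μ.restrict S) :=
    ⟨by simpa using (measure_mono hS).trans_lt (hμ ▸ ENNReal.one_lt_top)⟩
  rw [restrict_image_iota hμ hν hS, measure_image_iota_Zball hμ hν, ← ENNReal.smul_def,
    canonicalPartition_smul, canonicalPartition_map _ continuous_iota.measurable
      (measurable_sphericalKernel β),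
    canonicalPartition_restrict_congr μ hSm fun x hx y hy =>
      sphericalKernel_iota β (hS hx) (hS hy)]
  simp only [Fintype.card_fin]
  push_cast
  rfl

theorem canonicalPartition_restrict_Zball (hμ : μ (Zball p) = 1) (hν : IsGLInvariant p ν)
    (β : ℂ) (N : ℕ) :
    canonicalPartition (Fin N) (ν.restrict (iota p '' Zball p)) (sphericalKernel β) =
      (p / (p + 1)) ^ N * ZN p μ (Zball p) N β :=
  canonicalPartition_restrict_image_iota hμ hν isOpen_Zball.measurableSet subset_rfl β N

theorem canonicalPartition_restrict_compl_Zball (hμ : μ (Zball p) = 1)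
    (hν : IsGLInvariant p ν) (β : ℂ) (N : ℕ) :
    canonicalPartition (Fin N) (ν.restrict (iota p '' Zball p)ᶜ) (sphericalKernel β) =
      (p / (p + 1)) ^ N * ZN p μ (Pball p) N β := by
  rw [← canonicalPartition_restrict_image_iota hμ hν isOpen_Pball.measurableSet
      Pball_subset_Zball, ← map_inversion_restrict_compl hν,
    canonicalPartition_map _ measurable_inversion (measurable_sphericalKernel β)]
  simp only [sphericalKernel_inversion]

end SphericalKernel

theorem statement_14_general (p : ℕ) [Fact p.Prime]
    (μ : Measure ℚ_[p]) [SigmaFinite μ] [μ.IsAddLeftInvariant] (hμ : μ (Zball p) = 1)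
    (ν : Measure (P1 p)) [IsProbabilityMeasure ν] (hν : IsGLInvariant p ν)
    (β : ℂ) (hβ : 0 ≤ β.re) (f : ℂ) :
    Summable (fun N => ‖ZP1 p ν N β * f ^ N / (N.factorial : ℂ)‖) ∧
    Summable (fun N =>
      ‖ZN p μ (Zball p) N β * ((p : ℂ) * f / ((p : ℂ) + 1)) ^ N / (N.factorial : ℂ)‖) ∧
    Summable (fun N =>
      ‖ZN p μ (Pball p) N β * ((p : ℂ) * f / ((p : ℂ) + 1)) ^ N / (N.factorial : ℂ)‖) ∧
    (∑' N, ZP1 p ν N β * f ^ N / (N.factorial : ℂ)) =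
      (∑' N, ZN p μ (Zball p) N β * ((p : ℂ) * f / ((p : ℂ) + 1)) ^ N / (N.factorial : ℂ)) *
      (∑' N, ZN p μ (Pball p) N β * ((p : ℂ) * f / ((p : ℂ) + 1)) ^ N / (N.factorial : ℂ)) := by
  have hrescale (N : ℕ) (z : ℂ) :
      z * ((p : ℂ) * f / ((p : ℂ) + 1)) ^ N = (p / (p + 1)) ^ N * z * f ^ N := by
    rw [mul_div_right_comm, mul_pow]
    ring
  simp only [hrescale, ← canonicalPartition_restrict_Zball hμ hν,
    ← canonicalPartition_restrict_compl_Zball hμ hν]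
  have hbound := norm_sphericalKernel_le_one (p := p) hβ
  exact ⟨summable_norm_grandPartition ν hbound f, summable_norm_grandPartition _ hbound f,
    summable_norm_grandPartition _ hbound f,
    grandPartition_eq_mul ν
      (measurableEmbedding_iota.measurableSet_image.2 isOpen_Zball.measurableSet)
      (measurable_sphericalKernel β) hbound (fun _ hξ _ hη => sphericalKernel_eq_one β hξ hη) f⟩

theorem statement_14 (p : ℕ) [Fact p.Prime]
    (μ : Measure ℚ_[p]) [SigmaFinite μ] [μ.IsAddHaarMeasure] (hμ : μ (Zball p) = 1)
    (ν : Measure (P1 p)) [IsProbabilityMeasure ν] (hν : IsGLInvariant p ν)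
    (β : ℝ) (hβ : 0 < β) (f : ℂ) :
    Summable (fun N => ‖ZP1 p ν N (β : ℂ) * f ^ N / (N.factorial : ℂ)‖) ∧
    Summable (fun N =>
      ‖ZN p μ (Zball p) N (β : ℂ) * ((p : ℂ) * f / ((p : ℂ) + 1)) ^ N / (N.factorial : ℂ)‖) ∧
    Summable (fun N =>
      ‖ZN p μ (Pball p) N (β : ℂ) * ((p : ℂ) * f / ((p : ℂ) + 1)) ^ N / (N.factorial : ℂ)‖) ∧
    (∑' N, ZP1 p ν N (β : ℂ) * f ^ N / (N.factorial : ℂ)) =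
      (∑' N, ZN p μ (Zball p) N (β : ℂ) * ((p : ℂ) * f / ((p : ℂ) + 1)) ^ N /
          (N.factorial : ℂ)) *
      (∑' N, ZN p μ (Pball p) N (β : ℂ) * ((p : ℂ) * f / ((p : ℂ) + 1)) ^ N /
          (N.factorial : ℂ)) :=
  statement_14_general p μ hμ ν hν β (by simpa using hβ.le) f

end LogCoulomb
end

section
/- For every prime p, every integer N ≥ 2, and every β ∈ ℂ with Re(β) > −2/N, the integrals Z_k(ℤ_p, β) converge absolutely for all 0 ≤ k ≤ N and satisfy the quadratic recurrence Z_N(ℤ_p,β) / (N!·p^{(1/2)(N(N−1)/2)β}) = Σ_{k=1}^{N−1} (k/N) · [sinh((log p / 2)·[(N + (N(N−1)/2)β)(1 − 2k/N) + 1]) / sinh((log p / 2)·[(N + (N(N−1)/2)β) − 1])] · [Z_{N−k}(ℤ_p,β) / ((N−k)!·p^{(1/2)((N−k)(N−k−1)/2)β})] · [Z_k(ℤ_p,β) / (k!·p^{(1/2)(k(k−1)/2)β})]. -/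
open MeasureTheory
open scoped LinearAlgebra.Projectivization

namespace LogCoulomb

/-
The ball `ℤ_p` is the disjoint union of the `p` residue balls `a + pℤ_p`, each a copy of `ℤ_p`
scaled by `p⁻¹`, and points of different residue balls are at distance `1`, so they do not
interact. Hence the exponential generating function `Z` of the partition functions is the `p`-th
power of its rescaled version `G`. Applying the Euler operator `X d/dX` to `Z = G ^ p` and
multiplying by `G` gives `Z' G = p G' Z`: the exponent `p` becomes a scalar factor and a recurrence
quadratic in the coefficients appears, whose weights `p r_i - r_j`, with
`r_k = p ^ (-(k + k(k-1)β/2))`, are hyperbolic sines up to a factor that the normalization of `Z_k`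
absorbs.

Convergence comes from the same recurrence. For real `β = b` and the truncated weights
`max(r, p⁻ᵐ) ^ b`, rescaling lowers `m` by one, and the recurrence bounds the `n`-th coefficient at
level `m + 1` by `p r_n` times the one at level `m` plus a bounded term. As `b > -2/n` means
`p r_n < 1` (for `n ≥ 2`), the coefficients stay bounded as `m → ∞`, and Fatou's lemma applies.
-/

section PairProd

variable {α R ι κ : Type*} [Fintype ι] [LinearOrder ι] [Fintype κ] [LinearOrder κ]

/-- The product of the pair weights `g (x i) (x j)` over all pairs `i < j` of a configuration `x`.
The index type is an arbitrary finite linear order, so that subconfigurations are covered. -/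
def pairProd [CommMonoid R] (g : α → α → R) (x : ι → α) : R :=
  ∏ q : ι × ι with q.1 < q.2, g (x q.1) (x q.2)

section CommMonoid

variable [CommMonoid R]

lemma pairProd_comp_orderIso (g : α → α → R) (e : κ ≃o ι) (x : ι → α) :
    pairProd g (x ∘ e) = pairProd g x := by
  simp only [pairProd, Finset.prod_filter]
  rw [← (e.toEquiv.prodCongr e.toEquiv).prod_comp]
  simp

lemma pairProd_eq_mul_subtype (g : α → α → R) (P : ι → Prop) [DecidablePred P] (x : ι → α)
    (h : ∀ i j, P i → ¬ P j → g (x i) (x j) = 1 ∧ g (x j) (x i) = 1) :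
    pairProd g x =
      pairProd g (fun i : {i // P i} => x i) * pairProd g (fun i : {i // ¬ P i} => x i) := by
  simp only [pairProd, Finset.prod_filter, Fintype.prod_prod_type]
  rw [← Fintype.prod_subtype_mul_prod_subtype P]
  congr 1 <;> refine Finset.prod_congr rfl fun i _ => ?_ <;>
    rw [← Fintype.prod_subtype_mul_prod_subtype P]
  · rw [Finset.prod_eq_one (s := (Finset.univ : Finset {j // ¬ P j})), mul_one]
    · simp
    · exact fun j _ => by rw [(h i j i.2 j.2).1, ite_self]
  · rw [Finset.prod_eq_one (s := (Finset.univ : Finset {j // P j})), one_mul]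
    · simp
    · exact fun j _ => by rw [(h j i j.2 i.2).2, ite_self]

lemma pairProd_const_mul (c : R) (g : α → α → R) (x : ι → α) :
    pairProd (fun a b => c * g a b) x = c ^ (Fintype.card ι).choose 2 * pairProd g x := by
  simp only [pairProd, Finset.prod_mul_distrib, Finset.prod_const, Fintype.card_product_filter_lt]

lemma measurable_pairProd [MeasurableSpace R] [MeasurableMul₂ R] [MeasurableSpace α]
    {g : α → α → R} (hg : Measurable (Function.uncurry g)) :
    Measurable (pairProd g : (ι → α) → R) :=
  Finset.measurable_fun_prod _ fun q _ =>
    hg.comp (f := fun x : ι → α => (x q.1, x q.2))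
      ((measurable_pi_apply q.1).prodMk (measurable_pi_apply q.2))

end CommMonoid

lemma norm_pairProd [NormedField R] (g : α → α → R) (x : ι → α) :
    ‖pairProd g x‖ = pairProd (fun a b => ‖g a b‖) x :=
  norm_prod _ _

lemma pairProd_nonneg {g : α → α → ℝ} (hg : ∀ a b, 0 ≤ g a b) (x : ι → α) : 0 ≤ pairProd g x :=
  Finset.prod_nonneg fun _ _ => hg _ _

lemma pairProd_le_pairProd {f g : α → α → ℝ} {x : ι → α} (hf : ∀ a b, 0 ≤ f a b)
    (hfg : ∀ i j, f (x i) (x j) ≤ g (x i) (x j)) : pairProd f x ≤ pairProd g x :=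
  Finset.prod_le_prod (fun _ _ => hf _ _) fun _ _ => hfg _ _

end PairProd

section PartitionFunction

variable {α β 𝕜 ι : Type*} [RCLike 𝕜] [MeasurableSpace α] [MeasurableSpace β]
  [Fintype ι] [LinearOrder ι]

lemma pi_add_eq_sum_pi_ite (ν₁ ν₂ : Measure α) [SigmaFinite ν₁] [SigmaFinite ν₂] :
    Measure.pi (fun _ : ι => ν₁ + ν₂) =
      ∑ S : Finset ι, Measure.pi fun i => if i ∈ S then ν₁ else ν₂ := by
  have (S : Finset ι) (i : ι) : SigmaFinite (if i ∈ S then ν₁ else ν₂) := by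
    split_ifs <;> infer_instance
  refine Measure.pi_eq fun s _ => ?_
  simp only [Measure.coe_finsetSum, Finset.sum_apply, Measure.pi_pi, Measure.coe_add, Pi.add_apply]
  rw [Fintype.prod_add]
  refine Finset.sum_congr rfl fun S _ => ?_
  rw [← Finset.prod_mul_prod_compl S fun i => (if i ∈ S then ν₁ else ν₂) (s i)]
  congr 1 <;> refine Finset.prod_congr rfl fun i hi => ?_
  · rw [if_pos hi]
  · rw [if_neg (Finset.mem_compl.mp hi)]

lemma pi_le_pi_add (ν₁ ν₂ : Measure α) [SigmaFinite ν₁] [SigmaFinite ν₂] :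
    Measure.pi (fun _ : ι => ν₁) ≤ Measure.pi fun _ => ν₁ + ν₂ := by
  rw [pi_add_eq_sum_pi_ite]
  simpa using Finset.single_le_sum
    (f := fun S : Finset ι => Measure.pi fun i => if i ∈ S then ν₁ else ν₂)
    (fun _ _ => Measure.zero_le _) (Finset.mem_univ Finset.univ)

/-- The canonical partition function of `n` particles distributed according to `ν` and interacting
through the pair weight `g`; as a Bochner integral it is `0` when it does not converge. -/
noncomputable def partitionFn (ν : Measure α) (g : α → α → 𝕜) (n : ℕ) : 𝕜 :=
  ∫ x : Fin n → α, pairProd g x ∂Measure.pi fun _ => ν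

/-- The grand canonical partition function, i.e. the exponential generating function of
`partitionFn ν g`. It is multiplicative over sums of measures that do not interact with each
other. -/
noncomputable def grandPartitionFn (ν : Measure α) (g : α → α → 𝕜) : PowerSeries 𝕜 :=
  PowerSeries.mk fun n => partitionFn ν g n / n.factorial

lemma coeff_grandPartitionFn (ν : Measure α) (g : α → α → 𝕜) (n : ℕ) :
    PowerSeries.coeff n (grandPartitionFn ν g) = partitionFn ν g n / n.factorial :=
  PowerSeries.coeff_mk _ _

lemma partitionFn_zero (ν : Measure α) (g : α → α → 𝕜) : partitionFn ν g 0 = 1 := by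
  simp [partitionFn, pairProd, Measure.real]

lemma integral_pairProd_eq_partitionFn (ν : Measure α) [SigmaFinite ν] (g : α → α → 𝕜) :
    ∫ x : ι → α, pairProd g x ∂(Measure.pi fun _ => ν) = partitionFn ν g (Fintype.card ι) := by
  let e := Fintype.orderIsoFinOfCardEq ι rfl
  rw [partitionFn, ← (measurePreserving_piCongrLeft (fun _ : ι => ν) e.toEquiv).integral_comp']
  refine integral_congr_ae (ae_of_all _ fun x => ?_)
  dsimp only
  rw [← pairProd_comp_orderIso g e]
  congr 1
  ext i
  exact Equiv.piCongrLeft_apply_apply (P := fun _ => α) e.toEquiv x i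

lemma integral_pairProd_pi_ite {ν₁ ν₂ : Measure α} [SigmaFinite ν₁] [SigmaFinite ν₂]
    {g : α → α → 𝕜} {X Y : Set α} (hX : ∀ᵐ x ∂ν₁, x ∈ X) (hY : ∀ᵐ y ∂ν₂, y ∈ Y)
    (hg : ∀ x ∈ X, ∀ y ∈ Y, g x y = 1 ∧ g y x = 1) (P : ι → Prop) [DecidablePred P] :
    ∫ x, pairProd g x ∂(Measure.pi fun i => if P i then ν₁ else ν₂) =
      partitionFn ν₁ g (Fintype.card {i // P i}) *
        partitionFn ν₂ g (Fintype.card {i // ¬ P i}) := by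
  set ν : ι → Measure α := fun i => if P i then ν₁ else ν₂ with hν
  have (i : ι) : SigmaFinite (ν i) := by
    simp only [hν]; split_ifs <;> infer_instance
  have mem_ae (i : ι) : ∀ᵐ x ∂Measure.pi ν, (P i → x i ∈ X) ∧ (¬ P i → x i ∈ Y) := by
    refine (Measure.quasiMeasurePreserving_eval (μ := ν) i).ae
      (p := fun y => (P i → y ∈ X) ∧ (¬ P i → y ∈ Y)) ?_
    by_cases hi : P i <;> simpa [hν, hi]
  have split := measurePreserving_piEquivPiSubtypeProd ν P
  have ν_pos : (fun i : {i // P i} => ν i) = fun _ => ν₁ := funext fun i => if_pos i.2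
  have ν_neg : (fun i : {i // ¬ P i} => ν i) = fun _ => ν₂ := funext fun i => if_neg i.2
  rw [ν_pos, ν_neg] at split
  rw [← integral_pairProd_eq_partitionFn, ← integral_pairProd_eq_partitionFn, ← integral_prod_mul,
    ← split.integral_comp']
  refine integral_congr_ae ?_
  filter_upwards [ae_all_iff.mpr mem_ae] with x hx
  exact pairProd_eq_mul_subtype g P x fun i j hi hj => hg _ ((hx i).1 hi) _ ((hx j).2 hj)

lemma partitionFn_add {ν₁ ν₂ : Measure α} [SigmaFinite ν₁] [SigmaFinite ν₂]
    {g : α → α → 𝕜} {X Y : Set α} (hX : ∀ᵐ x ∂ν₁, x ∈ X) (hY : ∀ᵐ y ∂ν₂, y ∈ Y)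
    (hg : ∀ x ∈ X, ∀ y ∈ Y, g x y = 1 ∧ g y x = 1) {n : ℕ}
    (hint : Integrable (pairProd g) (Measure.pi fun _ : Fin n => ν₁ + ν₂)) :
    partitionFn (ν₁ + ν₂) g n = ∑ k ∈ Finset.range (n + 1),
      n.choose k * (partitionFn ν₁ g k * partitionFn ν₂ g (n - k)) := by
  rw [pi_add_eq_sum_pi_ite, integrable_finsetSum_measure] at hint
  rw [partitionFn, pi_add_eq_sum_pi_ite, integral_finsetSum_measure hint]
  have term (S : Finset (Fin n)) :
      ∫ x, pairProd g x ∂(Measure.pi fun i => if i ∈ S then ν₁ else ν₂) =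
        partitionFn ν₁ g S.card * partitionFn ν₂ g (n - S.card) := by
    rw [integral_pairProd_pi_ite hX hY hg (fun i => i ∈ S)]
    simp [Fintype.card_subtype_compl]
  simp_rw [term, ← nsmul_eq_mul]
  rw [← Finset.powerset_univ, Finset.sum_powerset_apply_card fun k =>
    partitionFn ν₁ g k * partitionFn ν₂ g (n - k), Finset.card_fin]

lemma coeff_grandPartitionFn_add {ν₁ ν₂ : Measure α} [SigmaFinite ν₁] [SigmaFinite ν₂]
    {g : α → α → 𝕜} {X Y : Set α} (hX : ∀ᵐ x ∂ν₁, x ∈ X) (hY : ∀ᵐ y ∂ν₂, y ∈ Y)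
    (hg : ∀ x ∈ X, ∀ y ∈ Y, g x y = 1 ∧ g y x = 1) {n : ℕ}
    (hint : Integrable (pairProd g) (Measure.pi fun _ : Fin n => ν₁ + ν₂)) :
    PowerSeries.coeff n (grandPartitionFn (ν₁ + ν₂) g) =
      PowerSeries.coeff n (grandPartitionFn ν₁ g * grandPartitionFn ν₂ g) := by
  rw [PowerSeries.coeff_mul, Finset.Nat.sum_antidiagonal_eq_sum_range_succ
    fun i j => PowerSeries.coeff i (grandPartitionFn ν₁ g) *
      PowerSeries.coeff j (grandPartitionFn ν₂ g)]
  simp only [coeff_grandPartitionFn, partitionFn_add hX hY hg hint, Finset.sum_div]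
  refine Finset.sum_congr rfl fun k hk => ?_
  have hkn : k ≤ n := Finset.mem_range_succ_iff.mp hk
  rw [Nat.cast_choose 𝕜 hkn]
  have := Nat.cast_ne_zero (R := 𝕜).mpr n.factorial_ne_zero
  field_simp

lemma grandPartitionFn_zero_measure (g : α → α → 𝕜) : grandPartitionFn (0 : Measure α) g = 1 := by
  ext n
  rw [coeff_grandPartitionFn, PowerSeries.coeff_one]
  split_ifs with hn
  · simp [hn, partitionFn_zero]
  · have : Measure.pi (fun _ : Fin n => (0 : Measure α)) = 0 := by
      rw [← Measure.measure_univ_eq_zero, Measure.pi_univ]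
      simp [hn]
    simp [partitionFn, this]

lemma coeff_grandPartitionFn_sum {κ : Type*} {s : Finset κ} {ν : κ → Measure α}
    [∀ a, SigmaFinite (ν a)] {g : α → α → 𝕜} {X : κ → Set α}
    (hX : ∀ a ∈ s, ∀ᵐ x ∂ν a, x ∈ X a)
    (hg : ∀ a ∈ s, ∀ b ∈ s, a ≠ b → ∀ x ∈ X a, ∀ y ∈ X b, g x y = 1) {n : ℕ}
    (hint : ∀ k ≤ n, Integrable (pairProd g) (Measure.pi fun _ : Fin k => ∑ a ∈ s, ν a)) :
    ∀ k ≤ n, PowerSeries.coeff k (grandPartitionFn (∑ a ∈ s, ν a) g) =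
      PowerSeries.coeff k (∏ a ∈ s, grandPartitionFn (ν a) g) := by
  classical
  induction s using Finset.induction_on with
  | empty => simp [grandPartitionFn_zero_measure]
  | insert a s ha ih =>
    have : SigmaFinite (∑ b ∈ s, ν b) :=
      Finset.sum_induction ν (SigmaFinite ·) (fun _ _ _ _ => inferInstance) inferInstance
        fun _ _ => inferInstance
    rw [Finset.sum_insert ha] at hint ⊢
    rw [Finset.prod_insert ha]
    have hXs : ∀ᵐ x ∂∑ b ∈ s, ν b, x ∈ ⋃ b ∈ s, X b := by
      refine ae_finsetSum_measure_iff.mpr fun b hb => ?_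
      filter_upwards [hX b (Finset.mem_insert_of_mem hb)] with x hx
      exact Set.mem_biUnion hb hx
    have cross : ∀ x ∈ X a, ∀ y ∈ ⋃ b ∈ s, X b, g x y = 1 ∧ g y x = 1 := by
      intro x hx y hy
      obtain ⟨b, hb, hyb⟩ := Set.mem_iUnion₂.mp hy
      have hab : a ≠ b := fun h => ha (h ▸ hb)
      have hb' : b ∈ insert a s := Finset.mem_insert_of_mem hb
      have ha' := Finset.mem_insert_self a s
      exact ⟨hg a ha' b hb' hab x hx y hyb, hg b hb' a ha' hab.symm y hyb x hx⟩
    have tail := ih (fun b hb => hX b (Finset.mem_insert_of_mem hb))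
      (fun b hb c hc => hg b (Finset.mem_insert_of_mem hb) c (Finset.mem_insert_of_mem hc))
      fun k hk => (hint k hk).mono_measure (by rw [add_comm]; exact pi_le_pi_add _ _)
    intro k hk
    rw [coeff_grandPartitionFn_add (hX a (Finset.mem_insert_self a s)) hXs cross (hint k hk),
      PowerSeries.coeff_mul, PowerSeries.coeff_mul]
    refine Finset.sum_congr rfl fun ij hij => ?_
    rw [tail ij.2 ((Finset.HasAntidiagonal.antidiagonal.snd_le hij).trans hk)]

lemma partitionFn_map {f : α → β} (hf : Measurable f) (ν : Measure α) [IsFiniteMeasure ν]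
    {g : β → β → 𝕜} (hg : Measurable (Function.uncurry g)) (n : ℕ) :
    partitionFn (ν.map f) g n = partitionFn ν (fun x y => g (f x) (f y)) n := by
  rw [partitionFn, ← Measure.pi_map_pi fun _ => hf.aemeasurable, integral_map]
  · rfl
  · exact (measurable_pi_lambda _ fun i => hf.comp (measurable_pi_apply i)).aemeasurable
  · exact (measurable_pairProd hg).aestronglyMeasurable

lemma partitionFn_smul (c : NNReal) (ν : Measure α) [SigmaFinite ν] (g : α → α → 𝕜) (n : ℕ) :
    partitionFn (c • ν) g n = (c : ℝ) ^ n * partitionFn ν g n := by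
  have pi_smul : Measure.pi (fun _ : Fin n => c • ν) = c ^ n • Measure.pi fun _ => ν := by
    refine Measure.pi_eq fun s _ => ?_
    simp only [Measure.smul_apply, Measure.pi_pi, Finset.prod_mul_distrib, Finset.prod_const,
      Finset.card_fin, ENNReal.smul_def, ENNReal.coe_pow, smul_eq_mul]
  rw [partitionFn, pi_smul, integral_smul_nnreal_measure, partitionFn, NNReal.smul_def,
    RCLike.real_smul_eq_coe_mul, NNReal.coe_pow, RCLike.ofReal_pow]

lemma partitionFn_const_mul (c : 𝕜) (ν : Measure α) (g : α → α → 𝕜) (n : ℕ) :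
    partitionFn ν (fun x y => c * g x y) n = c ^ n.choose 2 * partitionFn ν g n := by
  simp_rw [partitionFn, pairProd_const_mul, integral_const_mul, Fintype.card_fin]

lemma integrable_pairProd_of_bound {ν : Measure α} [IsFiniteMeasure ν] {g : α → α → 𝕜}
    (hg : Measurable (Function.uncurry g)) {X : Set α} (hX : ∀ᵐ x ∂ν, x ∈ X) {C : ℝ}
    (hC : ∀ x ∈ X, ∀ y ∈ X, ‖g x y‖ ≤ C) :
    Integrable (pairProd g) (Measure.pi fun _ : ι => ν) := by
  have mem_ae : ∀ᵐ x ∂Measure.pi fun _ : ι => ν, ∀ i, x i ∈ X :=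
    ae_all_iff.mpr fun i => (Measure.quasiMeasurePreserving_eval (μ := fun _ => ν) i).ae hX
  refine Integrable.of_bound (measurable_pairProd hg).aestronglyMeasurable
    (∏ q : ι × ι with q.1 < q.2, C) ?_
  filter_upwards [mem_ae] with x hx
  rw [norm_pairProd]
  exact pairProd_le_pairProd (g := fun _ _ => C) (fun _ _ => norm_nonneg _)
    fun i j => hC _ (hx i) _ (hx j)

end PartitionFunction

section SelfSimilarity

variable {p : ℕ} [Fact p.Prime]

lemma cast_prime_ne_zero (R : Type*) [AddMonoidWithOne R] [CharZero R] : (p : R) ≠ 0 :=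
  Nat.cast_ne_zero.mpr (Fact.out : p.Prime).ne_zero

lemma norm_natCast_sub_natCast_eq_one {a b : ℕ} (ha : a < p) (hb : b < p) (hab : a ≠ b) :
    ‖(a - b : ℚ_[p])‖ = 1 := by
  have not_dvd : ¬ (p : ℤ) ∣ a - b := fun h => by
    have := Int.eq_zero_of_abs_lt_dvd h (by rw [abs_lt]; constructor <;> omega)
    omega
  rw [← Padic.norm_intCast_lt_one_iff, Int.cast_sub, Int.cast_natCast, Int.cast_natCast,
    not_lt] at not_dvd
  refine le_antisymm ?_ not_dvd
  exact_mod_cast Padic.norm_int_le_one (p := p) (a - b)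

lemma norm_sub_eq_one_of_mem_ball {a b : ℕ} (ha : a < p) (hb : b < p) (hab : a ≠ b) {x y : ℚ_[p]}
    (hx : x ∈ Metric.ball (a : ℚ_[p]) 1) (hy : y ∈ Metric.ball (b : ℚ_[p]) 1) : ‖x - y‖ = 1 := by
  rw [mem_ball_iff_norm] at hx hy
  have residue := norm_natCast_sub_natCast_eq_one ha hb hab
  have error : ‖(x - a) + -(y - b)‖ < 1 :=
    (IsUltrametricDist.norm_add_le_max _ _).trans_lt (max_lt hx (by rwa [norm_neg]))
  rw [show x - y = (a - b) + ((x - a) + -(y - b)) by ring,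
    Padic.add_eq_max_of_ne (residue ▸ error.ne'), residue, max_eq_left error.le]

lemma Zball_eq_biUnion_ball : Zball p = ⋃ a ∈ Finset.range p, Metric.ball (a : ℚ_[p]) 1 := by
  ext x
  simp only [Zball, Set.mem_ofPred_eq, Set.mem_iUnion₂, Finset.mem_range, mem_ball_iff_norm,
    exists_prop]
  constructor
  · intro hx
    obtain ⟨a, ha, hxa⟩ := PadicInt.exists_mem_range (⟨x, hx⟩ : ℤ_[p])
    exact ⟨a, ha, (PadicInt.mem_nonunits (p := p)).mp ((IsLocalRing.mem_maximalIdeal _).mp hxa)⟩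
  · rintro ⟨a, -, hxa⟩
    rw [← sub_add_cancel x (a : ℚ_[p])]
    exact (IsUltrametricDist.norm_add_le_max _ _).trans
      (max_le hxa.le (by exact_mod_cast Padic.norm_int_le_one (p := p) a))

lemma norm_sub_le_one_of_mem_Zball {x y : ℚ_[p]} (hx : x ∈ Zball p) (hy : y ∈ Zball p) :
    ‖x - y‖ ≤ 1 := by
  rw [sub_eq_add_neg]
  exact (IsUltrametricDist.norm_add_le_max _ _).trans (max_le hx (by rwa [norm_neg]))

lemma measurableSet_Zball : MeasurableSet (Zball p) := by
  rw [Zball_eq_biUnion_ball]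
  exact Finset.measurableSet_biUnion _ fun _ _ => measurableSet_ball

lemma pairwiseDisjoint_residue_balls :
    (Finset.range p : Set ℕ).PairwiseDisjoint fun a => Metric.ball (a : ℚ_[p]) 1 := by
  intro a ha b hb hab
  refine Set.disjoint_left.mpr fun x hxa hxb => ?_
  simpa using
    norm_sub_eq_one_of_mem_ball (Finset.mem_range.mp ha) (Finset.mem_range.mp hb) hab hxa hxb

lemma restrict_Zball_eq_sum (μ : Measure ℚ_[p]) :
    μ.restrict (Zball p) = ∑ a ∈ Finset.range p, μ.restrict (Metric.ball (a : ℚ_[p]) 1) := by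
  rw [Zball_eq_biUnion_ball, Measure.restrict_biUnion_finset pairwiseDisjoint_residue_balls
    fun _ => measurableSet_ball, Measure.sum_fintype]
  exact Finset.sum_coe_sort (Finset.range p) fun a => μ.restrict (Metric.ball (a : ℚ_[p]) 1)

lemma preimage_affine_ball (a : ℚ_[p]) :
    (fun x => a + p * x) ⁻¹' Metric.ball a 1 = Zball p := by
  ext x
  have := Padic.norm_le_pow_iff_norm_lt_pow_add_one x 0
  have hp : (0 : ℝ) < p := by exact_mod_cast (Fact.out : p.Prime).pos
  simp only [zpow_zero, zero_add, zpow_one] at this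
  rw [Set.mem_preimage, mem_ball_iff_norm, add_sub_cancel_left, norm_mul, Padic.norm_p,
    inv_mul_lt_iff₀ hp, mul_one, ← this]
  rfl

variable (μ : Measure ℚ_[p]) [μ.IsAddHaarMeasure]

lemma measure_Zball_eq_mul : μ (Zball p) = p * μ (Metric.ball 0 1) := by
  have := congrArg (· Set.univ) (restrict_Zball_eq_sum μ)
  simpa [Measure.addHaar_ball_center] using this

lemma map_affine_eq_smul (a : ℚ_[p]) : μ.map (fun x => a + p * x) = (p : NNReal) • μ := by
  have hp := cast_prime_ne_zero (p := p) ℚ_[p]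
  have : (μ.map fun x => (p : ℚ_[p]) * x).IsAddHaarMeasure :=
    (ContinuousLinearEquiv.smulLeft (R₁ := ℚ_[p]) (Units.mk0 (p : ℚ_[p]) hp)).isAddHaarMeasure_map μ
  obtain ⟨c, hc⟩ : ∃ c : NNReal, μ.map (fun x => a + p * x) = c • μ := by
    have affine :=
      Measure.map_map (μ := μ) (measurable_const_add a) (measurable_const_mul (p : ℚ_[p]))
    rw [map_add_left_eq_self] at affine
    exact ⟨_, affine.symm.trans (Measure.isAddLeftInvariant_eq_smul _ μ)⟩
  have ball_ne_zero : μ (Metric.ball a 1) ≠ 0 := (Metric.measure_ball_pos μ a one_pos).ne'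
  have ball_ne_top : μ (Metric.ball a 1) ≠ ⊤ := measure_ball_lt_top.ne
  have hball := congrArg (· (Metric.ball a 1)) hc
  simp only [Measure.map_apply (show Measurable fun x : ℚ_[p] => a + p * x by fun_prop)
    measurableSet_ball, preimage_affine_ball, measure_Zball_eq_mul,
    ← Measure.addHaar_ball_center μ a, Measure.smul_apply, ENNReal.smul_def, smul_eq_mul,
    ENNReal.mul_left_inj ball_ne_zero ball_ne_top] at hball
  rw [hc, show c = p by exact_mod_cast hball.symm]

lemma restrict_ball_eq_smul_map (a : ℚ_[p]) :
    μ.restrict (Metric.ball a 1) =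
      (p : NNReal)⁻¹ • (μ.restrict (Zball p)).map (fun x => a + p * x) := by
  have haff : Measurable fun x : ℚ_[p] => a + p * x := by fun_prop
  rw [← preimage_affine_ball a, ← Measure.restrict_map haff measurableSet_ball,
    map_affine_eq_smul, Measure.restrict_smul, smul_smul,
    inv_mul_cancel₀ (cast_prime_ne_zero NNReal), one_smul]

end SelfSimilarity

section PowerSeries

open PowerSeries Finset.HasAntidiagonal

variable {R : Type*} [CommSemiring R]

lemma coeff_X_mul_derivative (F : PowerSeries R) (n : ℕ) :
    coeff n (X * d⁄dX R F) = n * coeff n F := by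
  cases n with
  | zero => simp
  | succ n => rw [coeff_succ_X_mul, coeff_derivative, mul_comm, Nat.cast_succ]

lemma coeff_X_mul_derivative_mul (F G : PowerSeries R) (n : ℕ) :
    coeff n (X * d⁄dX R F * G) = ∑ ij ∈ antidiagonal n, ij.1 * coeff ij.1 F * coeff ij.2 G := by
  rw [coeff_mul]
  exact Finset.sum_congr rfl fun ij _ => by rw [coeff_X_mul_derivative]

lemma X_mul_derivative_pow_mul (G : PowerSeries R) (m : ℕ) :
    X * d⁄dX R (G ^ m) * G = m • (X * d⁄dX R G * G ^ m) := by
  rw [Derivation.leibniz_pow]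
  cases m with
  | zero => simp
  | succ m =>
    simp only [nsmul_eq_mul, smul_eq_mul, Nat.add_sub_cancel]
    push_cast
    ring

lemma sum_antidiagonal_mul_coeff_of_coeff_eq_coeff_pow {F G : PowerSeries R} {m n : ℕ}
    (h : ∀ k ≤ n, coeff k F = coeff k (G ^ m)) :
    ∑ ij ∈ antidiagonal n, ij.1 * coeff ij.1 F * coeff ij.2 G =
      m * ∑ ij ∈ antidiagonal n, ij.1 * coeff ij.1 G * coeff ij.2 F := by
  calc ∑ ij ∈ antidiagonal n, ij.1 * coeff ij.1 F * coeff ij.2 G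
      = coeff n (X * d⁄dX R (G ^ m) * G) := by
        rw [coeff_X_mul_derivative_mul]
        exact Finset.sum_congr rfl fun ij hij => by rw [h _ (antidiagonal.fst_le hij)]
    _ = m * coeff n (X * d⁄dX R G * G ^ m) := by
        rw [X_mul_derivative_pow_mul, map_nsmul, nsmul_eq_mul]
    _ = m * ∑ ij ∈ antidiagonal n, ij.1 * coeff ij.1 G * coeff ij.2 F := by
        rw [coeff_X_mul_derivative_mul]
        congr 1
        exact Finset.sum_congr rfl fun ij hij => by rw [h _ (antidiagonal.snd_le hij)]

end PowerSeries

section ZballPartitionFunction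

open PowerSeries Finset.HasAntidiagonal

variable {p : ℕ} {𝕜 : Type*} [RCLike 𝕜]

/-- The factor by which the `n`-th coefficient of the grand canonical partition function on
`ℤ_p` changes when `ℤ_p` is shrunk to a residue ball, if shrinking multiplies each pair weight by
`c`. -/
noncomputable def residueFactor (p : ℕ) (c : 𝕜) (n : ℕ) : 𝕜 :=
  (p : 𝕜)⁻¹ ^ n * c ^ n.choose 2

lemma residueFactor_zero (c : 𝕜) : residueFactor p c 0 = 1 := by
  simp [residueFactor]

lemma residueFactor_nonneg {c : ℝ} (hc : 0 ≤ c) (n : ℕ) : 0 ≤ residueFactor p c n := by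
  rw [residueFactor]
  positivity

variable [Fact p.Prime]

/-- The coefficients `Z_n / n!` of the grand canonical partition function of the gas on `ℤ_p` whose
pair interaction is the radial weight `ψ ‖x - y‖`. -/
noncomputable def zballCoeff (μ : Measure ℚ_[p]) (ψ : ℝ → 𝕜) (n : ℕ) : 𝕜 :=
  coeff n (grandPartitionFn (μ.restrict (Zball p)) fun x y => ψ ‖x - y‖)

lemma zballCoeff_zero (μ : Measure ℚ_[p]) (ψ : ℝ → 𝕜) : zballCoeff μ ψ 0 = 1 := by
  simp [zballCoeff, coeff_grandPartitionFn, partitionFn_zero]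

lemma partitionFn_eq_factorial_mul_zballCoeff (μ : Measure ℚ_[p]) (ψ : ℝ → 𝕜) (n : ℕ) :
    partitionFn (μ.restrict (Zball p)) (fun x y => ψ ‖x - y‖) n =
      n.factorial * zballCoeff μ ψ n := by
  rw [zballCoeff, coeff_grandPartitionFn,
    mul_div_cancel₀ _ (Nat.cast_ne_zero.mpr n.factorial_ne_zero)]

lemma measurable_radial {ψ : ℝ → 𝕜} (hψ : Measurable ψ) :
    Measurable (Function.uncurry fun x y : ℚ_[p] => ψ ‖x - y‖) :=
  hψ.comp (measurable_fst.sub measurable_snd).norm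

variable (μ : Measure ℚ_[p]) [μ.IsAddHaarMeasure]

instance isFiniteMeasure_restrict_Zball : IsFiniteMeasure (μ.restrict (Zball p)) := by
  rw [isFiniteMeasure_restrict, measure_Zball_eq_mul]
  exact ENNReal.mul_ne_top (ENNReal.natCast_ne_top p) measure_ball_lt_top.ne

lemma zballCoeff_one (ψ : ℝ → 𝕜) : zballCoeff μ ψ 1 = μ.real (Zball p) := by
  have pairProd_one (x : Fin 1 → ℚ_[p]) : pairProd (fun x y => ψ ‖x - y‖) x = 1 :=
    Finset.prod_eq_one fun q hq =>
      absurd (Subsingleton.elim q.1 q.2) (Finset.mem_filter.mp hq).2.ne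
  simp [zballCoeff, coeff_grandPartitionFn, partitionFn, pairProd_one, Measure.real,
    RCLike.real_smul_eq_coe_mul, Measure.pi_univ]

variable {μ} {ψ ψ' : ℝ → 𝕜} {c : 𝕜}

lemma coeff_grandPartitionFn_restrict_ball (hψ : Measurable ψ)
    (scaling : ∀ r, 0 ≤ r → ψ ((p : ℝ)⁻¹ * r) = c * ψ' r) (a : ℚ_[p]) (n : ℕ) :
    coeff n (grandPartitionFn (μ.restrict (Metric.ball a 1)) fun x y => ψ ‖x - y‖) =
      residueFactor p c n * zballCoeff μ ψ' n := by
  have pair_weight (x y : ℚ_[p]) : ψ ‖(a + p * x) - (a + p * y)‖ = c * ψ' ‖x - y‖ := by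
    rw [add_sub_add_left_eq_sub, ← mul_sub, norm_mul, Padic.norm_p, scaling _ (norm_nonneg _)]
  rw [zballCoeff, coeff_grandPartitionFn, coeff_grandPartitionFn, restrict_ball_eq_smul_map,
    partitionFn_smul, partitionFn_map (by fun_prop) _ (measurable_radial hψ)]
  simp_rw [pair_weight]
  rw [partitionFn_const_mul, residueFactor]
  push_cast
  ring

lemma zballCoeff_eq_coeff_pow (hψ : Measurable ψ) (hψ_one : ψ 1 = 1)
    (scaling : ∀ r, 0 ≤ r → ψ ((p : ℝ)⁻¹ * r) = c * ψ' r) {n : ℕ}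
    (hint : ∀ k ≤ n, Integrable (pairProd fun x y => ψ ‖x - y‖)
      (Measure.pi fun _ : Fin k => μ.restrict (Zball p))) :
    ∀ k ≤ n, zballCoeff μ ψ k =
      coeff k (mk (fun k => residueFactor p c k * zballCoeff μ ψ' k) ^ p) := by
  intro k hk
  simp_rw [restrict_Zball_eq_sum] at hint
  have residue (a : ℕ) :
      grandPartitionFn (μ.restrict (Metric.ball (a : ℚ_[p]) 1)) (fun x y => ψ ‖x - y‖) =
        mk fun k => residueFactor p c k * zballCoeff μ ψ' k := by
    ext k
    rw [coeff_grandPartitionFn_restrict_ball hψ scaling, coeff_mk]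
  have cross (a : ℕ) (ha : a ∈ Finset.range p) (b : ℕ) (hb : b ∈ Finset.range p) (hab : a ≠ b)
      (x : ℚ_[p]) (hx : x ∈ Metric.ball (a : ℚ_[p]) 1) (y : ℚ_[p])
      (hy : y ∈ Metric.ball (b : ℚ_[p]) 1) : ψ ‖x - y‖ = 1 := by
    rw [norm_sub_eq_one_of_mem_ball (Finset.mem_range.mp ha) (Finset.mem_range.mp hb) hab hx hy,
      hψ_one]
  rw [zballCoeff, restrict_Zball_eq_sum,
    coeff_grandPartitionFn_sum (fun a _ => ae_restrict_mem measurableSet_ball) cross hint k hk]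
  simp_rw [residue, Finset.prod_const, Finset.card_range]

theorem zballCoeff_recurrence (hψ : Measurable ψ) (hψ_one : ψ 1 = 1)
    (scaling : ∀ r, 0 ≤ r → ψ ((p : ℝ)⁻¹ * r) = c * ψ' r) {n : ℕ}
    (hint : ∀ k ≤ n, Integrable (pairProd fun x y => ψ ‖x - y‖)
      (Measure.pi fun _ : Fin k => μ.restrict (Zball p))) :
    ∑ ij ∈ antidiagonal n, ij.1 * zballCoeff μ ψ ij.1 *
        (residueFactor p c ij.2 * zballCoeff μ ψ' ij.2) =
      p * ∑ ij ∈ antidiagonal n, ij.1 *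
        (residueFactor p c ij.1 * zballCoeff μ ψ' ij.1) * zballCoeff μ ψ ij.2 := by
  have := sum_antidiagonal_mul_coeff_of_coeff_eq_coeff_pow (F := mk (zballCoeff μ ψ)) (n := n)
    fun k hk => (coeff_mk _ _).trans (zballCoeff_eq_coeff_pow hψ hψ_one scaling hint k hk)
  simpa only [coeff_mk] using this

end ZballPartitionFunction

section Convergence

open Finset.HasAntidiagonal

lemma integrable_of_eventually_le_of_integral_le {Ω : Type*} [MeasurableSpace Ω] {ν : Measure Ω}
    {F : ℕ → Ω → ℝ} {f : Ω → ℝ} {B : ℝ} (hf : AEStronglyMeasurable f ν) (hf_nonneg : 0 ≤ f)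
    (hF_nonneg : ∀ m, 0 ≤ F m) (hF : ∀ m, Integrable (F m) ν)
    (hle : ∀ x, ∀ᶠ m in Filter.atTop, f x ≤ F m x) (hB : ∀ m, ∫ x, F m x ∂ν ≤ B) :
    Integrable f ν := by
  refine ⟨hf, ?_⟩
  calc ∫⁻ x, ‖f x‖ₑ ∂ν
      ≤ ∫⁻ x, Filter.liminf (fun m => ‖F m x‖ₑ) Filter.atTop ∂ν := by
        refine lintegral_mono fun x => Filter.le_liminf_of_le (by isBoundedDefault) ?_
        filter_upwards [hle x] with m hm
        rw [Real.enorm_of_nonneg (hf_nonneg x), Real.enorm_of_nonneg (hF_nonneg m x)]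
        exact ENNReal.ofReal_le_ofReal hm
    _ ≤ Filter.liminf (fun m => ∫⁻ x, ‖F m x‖ₑ ∂ν) Filter.atTop :=
        lintegral_liminf_le' fun m => (hF m).aestronglyMeasurable.enorm
    _ ≤ ENNReal.ofReal B := by
        refine Filter.liminf_le_of_frequently_le' (Filter.Frequently.of_forall fun m => ?_)
        rw [← ofReal_integral_norm_eq_lintegral_enorm (hF m)]
        simp only [Real.norm_of_nonneg (hF_nonneg m _)]
        exact ENNReal.ofReal_le_ofReal (hB m)
    _ < ⊤ := ENNReal.ofReal_lt_top

lemma bddAbove_range_of_le_mul_add {u : ℕ → ℝ} {ρ D : ℝ} (hρ : 0 ≤ ρ) (hρ_lt : ρ < 1)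
    (hu : ∀ m, u (m + 1) ≤ ρ * u m + D) : BddAbove (Set.range u) := by
  refine ⟨max (u 0) (D / (1 - ρ)), Set.forall_mem_range.mpr fun m => ?_⟩
  induction m with
  | zero => exact le_max_left _ _
  | succ m ih =>
    set M := max (u 0) (D / (1 - ρ))
    have hD : D ≤ M * (1 - ρ) := (div_le_iff₀ (sub_pos.mpr hρ_lt)).mp (le_max_right _ _)
    calc u (m + 1) ≤ ρ * M + M * (1 - ρ) :=
          (hu m).trans (add_le_add (mul_le_mul_of_nonneg_left ih hρ) hD)
      _ = M := by ring

lemma succ_le_of_sum_antidiagonal_eq {a a' r : ℕ → ℝ} {q B : ℝ} {n : ℕ} (ha : ∀ k, 0 ≤ a k)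
    (ha' : ∀ k, 0 ≤ a' k) (hr : ∀ k, 0 ≤ r k) (ha_zero : a 0 = 1) (ha'_zero : a' 0 = 1)
    (hr_zero : r 0 = 1) (hq : 0 ≤ q) (ha_le : ∀ k ≤ n, a k ≤ B) (ha'_le : ∀ k ≤ n, a' k ≤ B)
    (recurrence : ∑ ij ∈ antidiagonal (n + 1), ij.1 * a ij.1 * (r ij.2 * a' ij.2) =
      q * ∑ ij ∈ antidiagonal (n + 1), ij.1 * (r ij.1 * a' ij.1) * a ij.2) :
    a (n + 1) ≤ q * r (n + 1) * a' (n + 1) +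
      q * (∑ ij ∈ antidiagonal n, ij.1 * (r ij.1 * B) * B) / (n + 1) := by
  have term_le (ij : ℕ × ℕ) (hij : ij ∈ antidiagonal n) :
      ij.1 * (r ij.1 * a' ij.1) * a (ij.2 + 1) ≤ ij.1 * (r ij.1 * B) * B := by
    have hsum : ij.1 + ij.2 = n := mem_antidiagonal.mp hij
    have hB : 0 ≤ B := (ha 0).trans (ha_le 0 n.zero_le)
    rcases Nat.eq_zero_or_pos ij.1 with hi | hi
    · simp [hi]
    · have := hr ij.1
      have := ha (ij.2 + 1)
      gcongr
      · exact ha'_le _ (by omega)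
      · exact ha_le _ (by omega)
  have hn : (0 : ℝ) < n + 1 := n.cast_add_one_pos
  rw [← mul_le_mul_iff_right₀ hn, mul_add, mul_div_cancel₀ _ hn.ne']
  calc (n + 1) * a (n + 1)
      = (n + 1 : ℕ) * a (n + 1) * (r 0 * a' 0) := by
        rw [hr_zero, ha'_zero, mul_one, mul_one, Nat.cast_succ]
    _ ≤ ∑ ij ∈ antidiagonal (n + 1), ij.1 * a ij.1 * (r ij.2 * a' ij.2) :=
        Finset.single_le_sum (f := fun ij : ℕ × ℕ => ij.1 * a ij.1 * (r ij.2 * a' ij.2))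
          (a := (n + 1, 0))
          (fun ij _ => by have := ha ij.1; have := ha' ij.2; have := hr ij.2; positivity) (by simp)
    _ = q * ((n + 1 : ℕ) * (r (n + 1) * a' (n + 1)) * a 0 +
          ∑ ij ∈ antidiagonal n, ij.1 * (r ij.1 * a' ij.1) * a (ij.2 + 1)) := by
        rw [recurrence, Finset.Nat.sum_antidiagonal_succ']
    _ ≤ q * ((n + 1 : ℕ) * (r (n + 1) * a' (n + 1)) * a 0 +
          ∑ ij ∈ antidiagonal n, ij.1 * (r ij.1 * B) * B) := by
        gcongr _ * (_ + ?_)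
        exact Finset.sum_le_sum term_le
    _ = (n + 1) * (q * r (n + 1) * a' (n + 1)) +
          q * ∑ ij ∈ antidiagonal n, ij.1 * (r ij.1 * B) * B := by
        rw [ha_zero]
        push_cast
        ring

/-- The power weight `r ^ b`, frozen below the scale `p⁻¹ ^ m` at its value there: for `b < 0` a
bounded substitute for `r ^ b` which `p`-adic scaling only moves from level `m` to `m + 1`. -/
noncomputable def truncatedPow (p : ℕ) (b : ℝ) (m : ℕ) (r : ℝ) : ℝ :=
  max r ((p : ℝ)⁻¹ ^ m) ^ b

variable {p : ℕ} {b : ℝ} {m : ℕ}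

lemma truncatedPow_nonneg {r : ℝ} (hr : 0 ≤ r) : 0 ≤ truncatedPow p b m r :=
  Real.rpow_nonneg (le_max_of_le_left hr) b

lemma measurable_truncatedPow : Measurable (truncatedPow p b m) :=
  (measurable_id.max measurable_const).pow_const b

lemma truncatedPow_succ_inv_mul {r : ℝ} (hr : 0 ≤ r) :
    truncatedPow p b (m + 1) ((p : ℝ)⁻¹ * r) = (p : ℝ) ^ (-b) * truncatedPow p b m r := by
  have hpos : 0 ≤ (p : ℝ)⁻¹ := by positivity
  rw [truncatedPow, pow_succ', ← mul_max_of_nonneg _ _ hpos,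
    Real.mul_rpow hpos (le_max_of_le_left hr), Real.inv_rpow (Nat.cast_nonneg p),
    Real.rpow_neg (Nat.cast_nonneg p), truncatedPow]

lemma neg_two_lt_mul_of_le {n k : ℕ} (hk : k ≤ n) (h : -2 < n * b) : -2 < k * b := by
  rcases le_total 0 b with hb | hb
  · exact lt_of_lt_of_le (by norm_num) (mul_nonneg k.cast_nonneg hb)
  · exact h.trans_le (mul_le_mul_of_nonpos_right (Nat.cast_le.mpr hk) hb)

lemma zero_lt_add_choose_two_mul_sub_one {n : ℕ} (hn : 2 ≤ n) (hb : -2 < n * b) :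
    0 < n + n.choose 2 * b - 1 := by
  have hn' : (2 : ℝ) ≤ n := by exact_mod_cast hn
  have factor : n + n.choose 2 * b - 1 = (n - 1) * ((2 + n * b) / 2) := by
    rw [Nat.cast_choose_two]
    ring
  rw [factor]
  exact mul_pos (by linarith) (by linarith)

variable [hp : Fact p.Prime]

lemma inv_prime_pow_pos : 0 < (p : ℝ)⁻¹ ^ m :=
  pow_pos (inv_pos.mpr (Nat.cast_pos.mpr hp.out.pos)) m

lemma inv_prime_pow_le_one : (p : ℝ)⁻¹ ^ m ≤ 1 :=
  pow_le_one₀ (by positivity) (inv_le_one_of_one_le₀ (Nat.one_le_cast.mpr hp.out.one_le))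

lemma truncatedPow_one : truncatedPow p b m 1 = 1 := by
  rw [truncatedPow, max_eq_left inv_prime_pow_le_one, Real.one_rpow]

lemma truncatedPow_le {r : ℝ} (hr : r ≤ 1) :
    truncatedPow p b m r ≤ max 1 (((p : ℝ)⁻¹ ^ m) ^ b) := by
  rcases le_total 0 b with hb | hb
  · exact le_max_of_le_left <| Real.rpow_le_one (le_max_of_le_right inv_prime_pow_pos.le)
      (max_le hr inv_prime_pow_le_one) hb
  · exact le_max_of_le_right <|
      Real.rpow_le_rpow_of_nonpos inv_prime_pow_pos (le_max_right _ _) hb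

lemma eventually_rpow_le_truncatedPow {r : ℝ} (hr : 0 ≤ r) :
    ∀ᶠ m in Filter.atTop, r ^ b ≤ truncatedPow p b m r := by
  rcases hr.eq_or_lt with rfl | hr_pos
  · refine Filter.Eventually.of_forall fun m => ?_
    rcases eq_or_ne b 0 with rfl | hb
    · simp [truncatedPow]
    · rw [Real.zero_rpow hb]
      exact truncatedPow_nonneg le_rfl
  · have htend : Filter.Tendsto (fun m => (p : ℝ)⁻¹ ^ m) Filter.atTop (nhds 0) :=
      tendsto_pow_atTop_nhds_zero_of_lt_one (by positivity)
        (inv_lt_one_of_one_lt₀ (Nat.one_lt_cast.mpr hp.out.one_lt))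
    filter_upwards [htend.eventually_le_const hr_pos] with m hm
    rw [truncatedPow, max_eq_left hm]

lemma zballCoeff_nonneg {μ : Measure ℚ_[p]} {ψ : ℝ → ℝ} (hψ : ∀ r, 0 ≤ r → 0 ≤ ψ r) (n : ℕ) :
    0 ≤ zballCoeff μ ψ n := by
  rw [zballCoeff, coeff_grandPartitionFn]
  exact div_nonneg (integral_nonneg fun x => pairProd_nonneg (fun _ _ => hψ _ (norm_nonneg _)) x)
    (Nat.cast_nonneg _)

variable (μ : Measure ℚ_[p]) [μ.IsAddHaarMeasure]

lemma integrable_pairProd_truncatedPow (n : ℕ) :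
    Integrable (pairProd fun x y => truncatedPow p b m ‖x - y‖)
      (Measure.pi fun _ : Fin n => μ.restrict (Zball p)) := by
  refine integrable_pairProd_of_bound (measurable_radial measurable_truncatedPow)
    (ae_restrict_mem measurableSet_Zball) (C := max 1 (((p : ℝ)⁻¹ ^ m) ^ b)) fun x hx y hy => ?_
  rw [Real.norm_of_nonneg (truncatedPow_nonneg (norm_nonneg _))]
  exact truncatedPow_le (norm_sub_le_one_of_mem_Zball hx hy)

variable {μ} {n : ℕ}

lemma zballCoeff_truncatedPow_succ_le {B : ℝ}
    (hB : ∀ k ≤ n, ∀ m, zballCoeff μ (truncatedPow p b m) k ≤ B) (m : ℕ) :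
    zballCoeff μ (truncatedPow p b (m + 1)) (n + 1) ≤
      p * residueFactor p ((p : ℝ) ^ (-b)) (n + 1) * zballCoeff μ (truncatedPow p b m) (n + 1) +
      p * (∑ ij ∈ antidiagonal n, ij.1 * (residueFactor p ((p : ℝ) ^ (-b)) ij.1 * B) * B) /
        (n + 1) :=
  succ_le_of_sum_antidiagonal_eq (zballCoeff_nonneg fun _ => truncatedPow_nonneg)
    (zballCoeff_nonneg fun _ => truncatedPow_nonneg)
    (residueFactor_nonneg (Real.rpow_nonneg p.cast_nonneg _)) (zballCoeff_zero _ _)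
    (zballCoeff_zero _ _) (residueFactor_zero _) p.cast_nonneg (fun k hk => hB k hk (m + 1))
    (fun k hk => hB k hk m)
    (zballCoeff_recurrence measurable_truncatedPow truncatedPow_one
      (fun _ => truncatedPow_succ_inv_mul) fun k _ => integrable_pairProd_truncatedPow μ k)

lemma prime_mul_residueFactor_lt_one (hn : 2 ≤ n) (hb : -2 < n * b) :
    p * residueFactor p ((p : ℝ) ^ (-b)) n < 1 := by
  have hp_pos : (0 : ℝ) < p := Nat.cast_pos.mpr hp.out.pos
  have rpow_form : p * residueFactor p ((p : ℝ) ^ (-b)) n =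
      (p : ℝ) ^ (-(n + n.choose 2 * b - 1)) := by
    calc p * residueFactor p ((p : ℝ) ^ (-b)) n
        = (p : ℝ) ^ (1 : ℝ) * ((p : ℝ) ^ (-n : ℝ) * (p : ℝ) ^ (-b * n.choose 2)) := by
          rw [residueFactor, inv_pow, Real.rpow_mul_natCast hp_pos.le, Real.rpow_one,
            Real.rpow_neg hp_pos.le n, Real.rpow_natCast]
      _ = (p : ℝ) ^ (-(n + n.choose 2 * b - 1)) := by
          rw [← Real.rpow_add hp_pos, ← Real.rpow_add hp_pos]
          ring_nf
  rw [rpow_form]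
  exact Real.rpow_lt_one_of_one_lt_of_neg (Nat.one_lt_cast.mpr hp.out.one_lt)
    (neg_neg_of_pos (zero_lt_add_choose_two_mul_sub_one hn hb))

lemma bddAbove_range_zballCoeff_truncatedPow (hb : -2 < n * b) :
    BddAbove (Set.range fun m => zballCoeff μ (truncatedPow p b m) n) := by
  induction n using Nat.strong_induction_on with
  | h n ih =>
    match n with
    | 0 => simp [zballCoeff_zero]
    | 1 => simp [zballCoeff_one]
    | n + 2 =>
      obtain ⟨B, hB⟩ : BddAbove (⋃ k ∈ Set.Iic (n + 1),
          Set.range fun m => zballCoeff μ (truncatedPow p b m) k) :=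
        (Set.finite_Iic (n + 1)).bddAbove_biUnion.mpr fun k hk =>
          ih k (Nat.lt_succ_iff.mpr hk) (neg_two_lt_mul_of_le (Nat.le_succ_of_le hk) hb)
      have hB' (k : ℕ) (hk : k ≤ n + 1) (m : ℕ) : zballCoeff μ (truncatedPow p b m) k ≤ B :=
        hB (Set.mem_biUnion hk (Set.mem_range_self m))
      exact bddAbove_range_of_le_mul_add
        (mul_nonneg p.cast_nonneg (residueFactor_nonneg (Real.rpow_nonneg p.cast_nonneg _) _))
        (prime_mul_residueFactor_lt_one (p := p) le_add_self hb)
        (zballCoeff_truncatedPow_succ_le hB')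

lemma integrable_pairProd_norm_rpow (hb : -2 < n * b) :
    Integrable (pairProd fun x y : ℚ_[p] => ‖x - y‖ ^ b)
      (Measure.pi fun _ : Fin n => μ.restrict (Zball p)) := by
  obtain ⟨B, hB⟩ := bddAbove_range_zballCoeff_truncatedPow (μ := μ) hb
  refine integrable_of_eventually_le_of_integral_le (B := n.factorial * B)
    (F := fun m => pairProd fun x y => truncatedPow p b m ‖x - y‖)
    (measurable_pairProd (measurable_radial (measurable_id.pow_const b))).aestronglyMeasurable
    (pairProd_nonneg fun _ _ => Real.rpow_nonneg (norm_nonneg _) b)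
    (fun m => pairProd_nonneg fun _ _ => truncatedPow_nonneg (norm_nonneg _))
    (fun m => integrable_pairProd_truncatedPow μ n) (fun x => ?_) fun m => ?_
  · have pair_le (i j : Fin n) :
        ∀ᶠ m in Filter.atTop, ‖x i - x j‖ ^ b ≤ truncatedPow p b m ‖x i - x j‖ :=
      eventually_rpow_le_truncatedPow (norm_nonneg _)
    filter_upwards [Filter.eventually_all.mpr fun i => Filter.eventually_all.mpr (pair_le i)]
      with m hm
    exact pairProd_le_pairProd (fun _ _ => Real.rpow_nonneg (norm_nonneg _) b) hm
  · have hm : zballCoeff μ (truncatedPow p b m) n ≤ B := hB (Set.mem_range_self m)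
    exact (partitionFn_eq_factorial_mul_zballCoeff μ (truncatedPow p b m) n).trans_le
      (mul_le_mul_of_nonneg_left hm (Nat.cast_nonneg _))

lemma integrable_pairProd_norm_cpow {β : ℂ} (hβ : -2 < n * β.re) :
    Integrable (pairProd fun x y : ℚ_[p] => (‖x - y‖ : ℂ) ^ β)
      (Measure.pi fun _ : Fin n => μ.restrict (Zball p)) := by
  have norm_le (x y : ℚ_[p]) : ‖(‖x - y‖ : ℂ) ^ β‖ ≤ ‖x - y‖ ^ β.re := by
    simpa [Complex.arg_ofReal_of_nonneg] using Complex.norm_cpow_le (‖x - y‖ : ℂ) β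
  have measurable_pow : Measurable fun r : ℝ => (r : ℂ) ^ β :=
    Complex.measurable_ofReal.pow_const β
  refine (integrable_pairProd_norm_rpow hβ).mono'
    (measurable_pairProd (measurable_radial measurable_pow)).aestronglyMeasurable
    (ae_of_all _ fun x => ?_)
  rw [norm_pairProd]
  exact pairProd_le_pairProd (fun _ _ => norm_nonneg _) fun i j => norm_le _ _

end Convergence

section QuadraticRecurrence

open Finset.HasAntidiagonal

lemma sinh_ne_zero_of_re_ne_zero {z : ℂ} (hz : z.re ≠ 0) : Complex.sinh z ≠ 0 := by
  intro h
  have exp_eq : Complex.exp z = Complex.exp (-z) := by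
    rw [← sub_eq_zero, ← Complex.two_sinh, h, mul_zero]
  have := congrArg (‖·‖) exp_eq
  rw [Complex.norm_exp, Complex.norm_exp, Real.exp_eq_exp, Complex.neg_re] at this
  exact hz (self_eq_neg.mp this)

lemma exp_sub_exp_eq_exp_mul_sinh (u v : ℂ) :
    Complex.exp u - Complex.exp v =
      2 * Complex.exp ((u + v) / 2) * Complex.sinh ((u - v) / 2) := by
  rw [mul_right_comm, Complex.two_sinh, sub_mul, ← Complex.exp_add, ← Complex.exp_add]
  ring_nf

lemma eq_sum_Icc_of_sum_antidiagonal_eq_zero {K : Type*} [Field K] [CharZero K] {s f : ℕ → K}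
    {n : ℕ} (hn : n ≠ 0) (hs : s n ≠ 0) (hf : f 0 = 1)
    (h : ∑ ij ∈ antidiagonal n, ij.1 * s ij.1 * f ij.1 * f ij.2 = 0) :
    f n = ∑ k ∈ Finset.Icc 1 (n - 1), k / n * (s k / -s n) * f (n - k) * f k := by
  rw [Finset.Nat.sum_antidiagonal_eq_sum_range_succ_mk, Finset.sum_range_succ, tsub_self, hf,
    mul_one, Finset.range_eq_Ico, Finset.sum_eq_sum_Ico_succ_bot (Nat.pos_of_ne_zero hn),
    Nat.cast_zero, zero_mul, zero_mul, zero_mul, zero_add, zero_add, add_eq_zero_iff_neg_eq] at h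
  have hn' : (n : K) ≠ 0 := Nat.cast_ne_zero.mpr hn
  rw [← mul_right_inj' (mul_ne_zero hn' hs), ← h, ← Finset.sum_neg_distrib, Finset.mul_sum,
    ← Finset.Ico_add_one_right_eq_Icc, Nat.sub_one_add_one hn]
  refine Finset.sum_congr rfl fun k _ => ?_
  dsimp only
  field_simp

variable {p : ℕ} [Fact p.Prime]

lemma prime_cpow_eq_exp (z : ℂ) : (p : ℂ) ^ z = Complex.exp (Real.log p * z) := by
  rw [Complex.cpow_def_of_ne_zero (cast_prime_ne_zero ℂ), Complex.natCast_log]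

lemma residueFactor_cpow (β : ℂ) (n : ℕ) :
    residueFactor p ((p : ℂ) ^ (-β)) n = Complex.exp (-(Real.log p * (n + n.choose 2 * β))) := by
  rw [residueFactor, ← Complex.cpow_neg_one, ← Complex.cpow_mul_nat, ← Complex.cpow_mul_nat,
    prime_cpow_eq_exp, prime_cpow_eq_exp, ← Complex.exp_add]
  ring_nf

lemma prime_mul_residueFactor_sub_residueFactor (β : ℂ) {i j n : ℕ} (hij : i + j = n)
    (hn : n ≠ 0) :
    p * residueFactor p ((p : ℂ) ^ (-β)) i - residueFactor p ((p : ℂ) ^ (-β)) j =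
      2 * Complex.exp (Real.log p / 2 * (1 - n - i.choose 2 * β - j.choose 2 * β)) *
        Complex.sinh (Real.log p / 2 * ((n + n.choose 2 * β) * (1 - 2 * i / n) + 1)) := by
  have hn' : (n : ℂ) ≠ 0 := Nat.cast_ne_zero.mpr hn
  have exponent_diff : (n + n.choose 2 * β) * (1 - 2 * i / n) =
      (j + j.choose 2 * β) - (i + i.choose 2 * β) := by
    simp only [Nat.cast_choose_two]
    field_simp
    rw [← hij]
    push_cast
    ring
  have p_eq : (p : ℂ) = Complex.exp (Real.log p) := by
    rw [← mul_one (Real.log p : ℂ), ← prime_cpow_eq_exp, Complex.cpow_one]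
  have exponent_sum : (i + j : ℂ) = n := by exact_mod_cast hij
  rw [residueFactor_cpow, residueFactor_cpow, exponent_diff]
  nth_rw 1 [p_eq]
  rw [← Complex.exp_add, exp_sub_exp_eq_exp_mul_sinh, ← exponent_sum]
  ring_nf

variable (μ : Measure ℚ_[p]) [μ.IsAddHaarMeasure]

lemma sum_antidiagonal_zballCoeff_cpow {β : ℂ} {n : ℕ} (hβ : -2 < n * β.re) :
    ∑ ij ∈ antidiagonal n, ij.1 *
        (p * residueFactor p ((p : ℂ) ^ (-β)) ij.1 - residueFactor p ((p : ℂ) ^ (-β)) ij.2) *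
        (zballCoeff μ (fun r => (r : ℂ) ^ β) ij.1 * zballCoeff μ (fun r => (r : ℂ) ^ β) ij.2) =
      0 := by
  have scaling (r : ℝ) (hr : 0 ≤ r) :
      (((p : ℝ)⁻¹ * r : ℝ) : ℂ) ^ β = (p : ℂ) ^ (-β) * (r : ℂ) ^ β := by
    rw [Complex.ofReal_mul, Complex.mul_cpow_ofReal_nonneg (by positivity) hr, Complex.ofReal_inv,
      Complex.ofReal_natCast, Complex.inv_cpow _ _ (by simp [Real.pi_ne_zero.symm]),
      Complex.cpow_neg]
  have recurrence := zballCoeff_recurrence (μ := μ) (Complex.measurable_ofReal.pow_const β)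
    (by simp) scaling fun k hk => integrable_pairProd_norm_cpow (neg_two_lt_mul_of_le hk hβ)
  rw [Finset.mul_sum] at recurrence
  rw [← sub_eq_zero.mpr recurrence.symm, ← Finset.sum_sub_distrib]
  exact Finset.sum_congr rfl fun ij _ => by ring

/-- The rescaled partition function `Z_n(ℤ_p, β) / (n! p^{n(n-1)β/4})` of the quadratic
recurrence. -/
noncomputable def scaledZN (β : ℂ) (n : ℕ) : ℂ :=
  ZN p μ (Zball p) n β / (n.factorial * (p : ℂ) ^ (n.choose 2 * β / 2))

lemma scaledZN_eq_mul_zballCoeff (β : ℂ) (n : ℕ) :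
    scaledZN μ β n = Complex.exp (-(Real.log p / 2 * (n.choose 2 * β))) *
      zballCoeff μ (fun r => (r : ℂ) ^ β) n := by
  have hZN : ZN p μ (Zball p) n β = n.factorial * zballCoeff μ (fun r => (r : ℂ) ^ β) n :=
    partitionFn_eq_factorial_mul_zballCoeff μ (fun r => (r : ℂ) ^ β) n
  rw [scaledZN, hZN, mul_div_mul_left _ _ (Nat.cast_ne_zero.mpr n.factorial_ne_zero),
    prime_cpow_eq_exp, div_eq_mul_inv, ← Complex.exp_neg, mul_comm]
  ring_nf

lemma scaledZN_zero (β : ℂ) : scaledZN μ β 0 = 1 := by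
  simp [scaledZN_eq_mul_zballCoeff, zballCoeff_zero]

theorem sum_antidiagonal_sinh_mul_scaledZN {β : ℂ} {n : ℕ} (hn : n ≠ 0) (hβ : -2 < n * β.re) :
    ∑ ij ∈ antidiagonal n, ij.1 *
        Complex.sinh (Real.log p / 2 * ((n + n.choose 2 * β) * (1 - 2 * ij.1 / n) + 1)) *
        scaledZN μ β ij.1 * scaledZN μ β ij.2 = 0 := by
  have hne : (2 * Complex.exp (Real.log p / 2 * (1 - n)) : ℂ) ≠ 0 :=
    mul_ne_zero two_ne_zero (Complex.exp_ne_zero _)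
  rw [← mul_right_inj' hne, mul_zero, ← sum_antidiagonal_zballCoeff_cpow μ hβ, Finset.mul_sum]
  refine Finset.sum_congr rfl fun ij hij => ?_
  have exponent_split :
      Complex.exp (Real.log p / 2 * (1 - n - ij.1.choose 2 * β - ij.2.choose 2 * β)) =
        Complex.exp (Real.log p / 2 * (1 - n)) *
          (Complex.exp (-(Real.log p / 2 * (ij.1.choose 2 * β))) *
            Complex.exp (-(Real.log p / 2 * (ij.2.choose 2 * β)))) := by
    rw [← Complex.exp_add, ← Complex.exp_add]
    ring_nf
  rw [prime_mul_residueFactor_sub_residueFactor β (mem_antidiagonal.mp hij) hn,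
    scaledZN_eq_mul_zballCoeff, scaledZN_eq_mul_zballCoeff, exponent_split]
  ring

lemma sinh_log_prime_ne_zero {β : ℂ} {n : ℕ} (hn : 2 ≤ n) (hβ : -2 < n * β.re) :
    Complex.sinh (Real.log p / 2 * ((n + n.choose 2 * β) - 1)) ≠ 0 := by
  have log_pos : 0 < Real.log p :=
    Real.log_pos (Nat.one_lt_cast.mpr (Fact.out : p.Prime).one_lt)
  refine sinh_ne_zero_of_re_ne_zero ?_
  have re_eq : (Real.log p / 2 * ((n + n.choose 2 * β) - 1) : ℂ).re =
      Real.log p / 2 * (n + n.choose 2 * β.re - 1) := by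
    rw [← Complex.ofReal_ofNat, ← Complex.ofReal_div, Complex.re_ofReal_mul]
    simp
  rw [re_eq]
  exact (mul_pos (half_pos log_pos) (zero_lt_add_choose_two_mul_sub_one hn hβ)).ne'

theorem statement_15_general {n : ℕ} (hn : 2 ≤ n) {β : ℂ} (hβ : -2 / (n : ℝ) < β.re) :
    (∀ k ≤ n, Integrable (pairProd fun x y : ℚ_[p] => (‖x - y‖ : ℂ) ^ β)
      (Measure.pi fun _ : Fin k => μ.restrict (Zball p))) ∧
    scaledZN μ β n = ∑ k ∈ Finset.Icc 1 (n - 1), (k : ℂ) / n *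
      (Complex.sinh (Real.log p / 2 * ((n + n.choose 2 * β) * (1 - 2 * k / n) + 1)) /
        Complex.sinh (Real.log p / 2 * ((n + n.choose 2 * β) - 1))) *
      scaledZN μ β (n - k) * scaledZN μ β k := by
  have hn_ne_zero : n ≠ 0 := by omega
  have hn_pos : (0 : ℝ) < n := Nat.cast_pos.mpr (Nat.pos_of_ne_zero hn_ne_zero)
  have hβ' : -2 < n * β.re := (div_lt_iff₀' hn_pos).mp hβ
  refine ⟨fun k hk => integrable_pairProd_norm_cpow (neg_two_lt_mul_of_le hk hβ'), ?_⟩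
  set s : ℕ → ℂ := fun k => Complex.sinh (Real.log p / 2 *
    ((n + n.choose 2 * β) * (1 - 2 * k / n) + 1)) with hs
  have s_n : s n = -Complex.sinh (Real.log p / 2 * ((n + n.choose 2 * β) - 1)) := by
    rw [hs, ← Complex.sinh_neg]
    field_simp
    ring_nf
  have s_n_ne_zero : s n ≠ 0 := by
    rw [s_n]
    exact neg_ne_zero.mpr (sinh_log_prime_ne_zero hn hβ')
  have recurrence := eq_sum_Icc_of_sum_antidiagonal_eq_zero hn_ne_zero s_n_ne_zero
    (scaledZN_zero μ β) (sum_antidiagonal_sinh_mul_scaledZN μ hn_ne_zero hβ')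
  rwa [s_n, neg_neg] at recurrence

end QuadraticRecurrence

theorem statement_15 (p : ℕ) [Fact p.Prime]
    (μ : Measure ℚ_[p]) [SigmaFinite μ] [μ.IsAddHaarMeasure] (hμ : μ (Zball p) = 1)
    (N : ℕ) (hN : 2 ≤ N) (β : ℂ) (hβ : -2 / (N : ℝ) < β.re) :
    (∀ k ≤ N, Integrable
        (fun x : Fin k → ℚ_[p] => ∏ q ∈ pairs k, (‖x q.1 - x q.2‖ : ℂ) ^ β)
        (Measure.pi fun _ => μ.restrict (Zball p))) ∧
    ZN p μ (Zball p) N β / ((N.factorial : ℂ) * (p : ℂ) ^ ((N.choose 2 : ℂ) * β / 2)) =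
      ∑ k ∈ Finset.Icc 1 (N - 1), ((k : ℂ) / (N : ℂ)) *
        (Complex.sinh (((Real.log p : ℂ) / 2) *
            (((N : ℂ) + (N.choose 2 : ℂ) * β) * (1 - 2 * (k : ℂ) / (N : ℂ)) + 1)) /
          Complex.sinh (((Real.log p : ℂ) / 2) * (((N : ℂ) + (N.choose 2 : ℂ) * β) - 1))) *
        (ZN p μ (Zball p) (N - k) β /
          (((N - k).factorial : ℂ) * (p : ℂ) ^ (((N - k).choose 2 : ℂ) * β / 2))) *
        (ZN p μ (Zball p) k β /
          ((k.factorial : ℂ) * (p : ℂ) ^ ((k.choose 2 : ℂ) * β / 2))) := by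
  exact statement_15_general μ hN hβ

end LogCoulomb
end
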